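/- A pair (X, Y) of topological spaces with Y ⊂ X is homeomorphic to the pair (ℓ₂(κ), ℓ₂ᶠ(κ)) for an infinite cardinal κ if and only if: (1) the space X is homeomorphic to ℓ₂(κ); (2) the space Y can be written as a countable union of finite-dimensional locally compact spaces; and (3) the space Y absorbs finite-dimensional compact subsets of X, in the sense that for each finite-dimensional compact subset K ⊂ X, each compact subset B ⊂ K ∩ Y, and each open cover 𝒰 of X there is a topological embedding h : K → Y such that h|B = id|B and h is 𝒰-near to the identity embedding id : K → X. -/

import Mathlib

noncomputable section
open Set Topology

/-- The Hilbert cube `𝕀^ω`. -/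
abbrev HilbertCube : Type := ℕ → Set.Icc (0:ℝ) 1

/-- The Hilbert space `ℓ₂(ι)` of square-summable real families indexed by `ι`. -/
abbrev l2Space (ι : Type u) : Type u := ↥(lp (fun _ : ι => ℝ) 2)

/-- `ℓ₂ᶠ(ι)`: the set of finitely supported elements of `ℓ₂(ι)`,
i.e. the linear hull of the standard orthonormal basis. -/
def l2fin (ι : Type u) : Set (l2Space ι) := {x | {i | (x : ∀ _ : ι, ℝ) i ≠ 0}.Finite}

/-- The density `dens X` of a topological space: the smallest cardinality of a dense subset. -/
def dens (X : Type u) [TopologicalSpace X] : Cardinal.{u} :=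
  sInf {c | ∃ s : Set X, Dense s ∧ Cardinal.mk s = c}

/-- A family of sets is an open cover of the space. -/
def IsOpenCover {X : Type*} [TopologicalSpace X] (𝒰 : Set (Set X)) : Prop :=
  (∀ U ∈ 𝒰, IsOpen U) ∧ ⋃₀ 𝒰 = Set.univ

/-- The covering dimension of `X` is at most `n`: every open cover admits an open
refinement in which every point lies in at most `n + 1` members. -/
def CovDimLE (X : Type*) [TopologicalSpace X] (n : ℕ) : Prop :=
  ∀ 𝒰 : Set (Set X), IsOpenCover 𝒰 →
    ∃ 𝒱 : Set (Set X), IsOpenCover 𝒱 ∧ (∀ V ∈ 𝒱, ∃ U ∈ 𝒰, V ⊆ U) ∧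
      ∀ x : X, {V ∈ 𝒱 | x ∈ V}.Finite ∧ {V ∈ 𝒱 | x ∈ V}.ncard ≤ n + 1

/-- A topological space is finite-dimensional if it has finite covering dimension. -/
def TopFinDim (X : Type*) [TopologicalSpace X] : Prop := ∃ n, CovDimLE X n

/-- A closed set `A ⊆ X` is a `Z`-set if the maps of the Hilbert cube into `X`
missing `A` are dense in `C(𝕀^ω, X)` with the compact-open topology. -/
def IsZSet {X : Type*} [TopologicalSpace X] (A : Set X) : Prop :=
  IsClosed A ∧ Dense {f : C(HilbertCube, X) | Set.range f ∩ A = ∅}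

/-- `A` has infinite codimension in `B`: the linear hull of `A` has infinite
codimension in the linear hull of `B`. -/
def InfiniteCodimIn {E : Type*} [AddCommGroup E] [Module ℝ E] (A B : Set E) : Prop :=
  ¬ Module.Finite ℝ
    (↥(Submodule.span ℝ B) ⧸ (Submodule.span ℝ A).comap (Submodule.span ℝ B).subtype)

/-!
Write `V = ℓ₂(κ)`. Two properties of a subset of `V` matter: being a countable union of
finite-dimensional locally compact sets, and absorbing finite-dimensional compacta. The set
`ℓ₂ᶠ(κ)` has both, both are invariant under homeomorphisms of the ambient space, and any two
subsets `Y`, `Y'` of `V` with both properties are exchanged by a homeomorphism of `V`.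

The geometric input for the exchange is the unknotting of compacta in `V`
(`exists_homeomorph_extending`): an embedding `h : K → V` of a compact set that is close to the
identity and fixes `D ∩ K` pointwise, where `D` is closed, extends to a homeomorphism of `V`
close to the identity and supported near `K \ D`. After a small homeomorphism the sets `K` and
`h(K)` vanish on an infinite set `J` of coordinates. Klee's trick then applies: `x ↦ h x` is the
composition `x ↦ x + j x ↦ h x + j x ↦ h x`, where `j` maps into the coordinates of `J`,
vanishes on `D` and is injective off it. Each of the three steps adds to a point a function of
its remaining coordinates, so it extends to a shear of `V` by the Dugundji extension theorem;
cutoff functions localize the shears.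

Combined with absorption, unknotting yields homeomorphisms of `V`, arbitrarily close to the
identity, that take a finite-dimensional compactum into `Y` and fix a given set `C ⊆ Y` that is
locally a finite-dimensional compactum. Such homeomorphisms with discrete supports can be glued.
This is what makes uncountable `κ` accessible: by Stone's well-ordering argument a locally
compact finite-dimensional set is a countable union of discrete unions of finite-dimensional
compacta, and each discrete union is moved at once. A back-and-forth construction over the
decompositions of `Y` and `Y'` produces homeomorphisms which, together with their inverses,
converge uniformly; the limit maps `Y` onto `Y'`.

Covering dimension enters only through the equivalence, for compact metric spaces, of finite
covering dimension with embeddability into some `ℝ^m`: one direction is the Menger–Nöbeling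
theorem (`CovDimLE.exists_injective`), the other uses grids of overlapping cubes
(`covDimLE_of_isInducing`).
-/

/-! ### Dugundji extension -/

theorem exists_continuousOn_factor {V Z W : Type*} [TopologicalSpace V] [TopologicalSpace Z]
    [T2Space Z] [TopologicalSpace W] [Nonempty W] {K : Set V} (hK : IsCompact K) {φ : V → Z}
    {ψ : V → W} (hφ : ContinuousOn φ K) (hψ : ContinuousOn ψ K)
    (hfiber : ∀ x ∈ K, ∀ y ∈ K, φ x = φ y → ψ x = ψ y) :
    ∃ g : Z → W, ContinuousOn g (φ '' K) ∧ ∀ x ∈ K, g (φ x) = ψ x := by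
  have : CompactSpace K := isCompact_iff_compactSpace.1 hK
  let q : K → ↥(φ '' K) := (mapsTo_image φ K).restrict φ K (φ '' K)
  have hq : Continuous q := hφ.mapsToRestrict (mapsTo_image φ K)
  have hquot : IsQuotientMap q :=
    hq.isClosedMap.isQuotientMap hq (surjective_mapsTo_image_restrict φ K)
  have hfactors : (K.domRestrict ψ).FactorsThrough (K.domRestrict φ) := fun x y =>
    hfiber x x.2 y y.2
  let g : Z → W :=
    Function.extend (K.domRestrict φ) (K.domRestrict ψ) fun _ => Classical.arbitrary W
  have hgψ : ∀ x : K, g (φ x) = ψ x := fun x => hfactors.extend_apply _ x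
  refine ⟨g, ?_, fun x hx => hgψ ⟨x, hx⟩⟩
  rw [continuousOn_iff_continuous_domRestrict, hquot.continuous_iff,
    show (φ '' K).domRestrict g ∘ q = K.domRestrict ψ from funext hgψ]
  exact hψ.domRestrict

section Dugundji

variable {Z W : Type*} [MetricSpace Z] [AddCommGroup W] [Module ℝ W]
  {N : Set Z} {f : Z → W} {z : Z}

/-- The set of admissible values at `z ∉ N` of a Dugundji extension of `f|N`: the convex hull of the
values of `f` at the points of `N` that are nearly closest to `z`. The factor `2` could be any
number greater than `1`. -/
def dugundjiHull (N : Set Z) (f : Z → W) (z : Z) : Set W :=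
  convexHull ℝ (f '' {a ∈ N | dist z a < 2 * Metric.infDist z N})

theorem dugundjiHull_subset {C : Set W} (hC : Convex ℝ C) (hfC : MapsTo f N C) :
    dugundjiHull N f z ⊆ C :=
  convexHull_min (image_subset_iff.2 fun _ ha => hfC ha.1) hC

theorem exists_eventually_mem_dugundjiHull (hN : IsClosed N) (hne : N.Nonempty) (hz : z ∉ N) :
    ∃ c, ∀ᶠ y in 𝓝 z, c ∈ dugundjiHull N f y := by
  have hpos : 0 < Metric.infDist z N := (hN.notMem_iff_infDist_pos hne).1 hz
  obtain ⟨a, haN, ha⟩ := (Metric.infDist_lt_iff hne).1 (lt_two_mul_self hpos)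
  have hcont : Continuous fun y => 2 * Metric.infDist y N :=
    (Metric.continuous_infDist_pt N).const_mul 2
  have hnear : ∀ᶠ y in 𝓝 z, dist y a < 2 * Metric.infDist y N :=
    (isOpen_lt (continuous_id.dist continuous_const) hcont).mem_nhds ha
  exact ⟨f a, hnear.mono fun y hy => subset_convexHull ℝ _ ⟨a, ⟨haN, hy⟩, rfl⟩⟩

theorem eventually_dugundjiHull_subset [TopologicalSpace W] (hf : ContinuousOn f N) (hz : z ∈ N)
    {U : Set W} (hU : U ∈ 𝓝 (f z)) (hUc : Convex ℝ U) :
    ∀ᶠ y in 𝓝 z, dugundjiHull N f y ⊆ U := by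
  obtain ⟨δ, hδ, hfδ⟩ := Metric.mem_nhdsWithin_iff.1 (hf z hz hU)
  filter_upwards [Metric.ball_mem_nhds z (div_pos hδ three_pos)] with y hy
  refine convexHull_min (image_subset_iff.2 ?_) hUc
  rintro a ⟨haN, hya⟩
  have hinf : Metric.infDist y N ≤ dist y z := Metric.infDist_le_dist_of_mem hz
  have htri := dist_triangle_left a z y
  exact hfδ ⟨Metric.mem_ball.2 (by linarith [Metric.mem_ball.1 hy]), haN⟩

variable [TopologicalSpace W]

theorem continuous_of_mem_dugundjiHull [IsTopologicalAddGroup W] [ContinuousSMul ℝ W]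
    [LocallyConvexSpace ℝ W] (hN : IsClosed N) (hf : ContinuousOn f N) {G : Z → W}
    (hGN : EqOn G f N) (hG : ContinuousOn G Nᶜ) (hGhull : ∀ z ∉ N, G z ∈ dugundjiHull N f z) :
    Continuous G := by
  refine continuous_iff_continuousAt.2 fun z => ?_
  by_cases hz : z ∈ N
  · rw [ContinuousAt, hGN hz]
    refine (LocallyConvexSpace.convex_basis (𝕜 := ℝ) (f z)).tendsto_right_iff.2 ?_
    rintro U ⟨hU, hUc⟩
    filter_upwards [eventually_dugundjiHull_subset hf hz hU hUc,
      mem_nhdsWithin_iff_eventually.1 (hf z hz hU)] with y hyhull hyN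
    by_cases hy : y ∈ N
    · exact hGN hy ▸ hyN hy
    · exact hyhull (hGhull y hy)
  · exact hG.continuousAt (hN.isOpen_compl.mem_nhds hz)

theorem exists_dugundji_extension [IsTopologicalAddGroup W] [ContinuousSMul ℝ W]
    [LocallyConvexSpace ℝ W] (hN : IsClosed N) (hf : ContinuousOn f N) {C : Set W}
    (hC : Convex ℝ C) (hCne : C.Nonempty) (hfC : MapsTo f N C) :
    ∃ G : Z → W, Continuous G ∧ EqOn G f N ∧ ∀ z, G z ∈ C := by
  classical
  rcases N.eq_empty_or_nonempty with rfl | hne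
  · obtain ⟨c, hc⟩ := hCne
    exact ⟨fun _ => c, continuous_const, eqOn_empty _ _, fun _ => hc⟩
  obtain ⟨g, hg⟩ := exists_continuous_forall_mem_convex_of_local_const
    (t := fun z : ↥Nᶜ => dugundjiHull N f z) (fun z => convex_convexHull ℝ _) fun z =>
      (exists_eventually_mem_dugundjiHull hN hne z.2).imp fun _ hc =>
        continuous_subtype_val.continuousAt.eventually hc
  let G : Z → W := fun z => if h : z ∈ N then f z else g ⟨z, h⟩
  have hGN : EqOn G f N := fun z hz => dif_pos hz
  have hGc : ∀ z : ↥Nᶜ, G z = g z := fun z => dif_neg z.2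
  have hGhull : ∀ z ∉ N, G z ∈ dugundjiHull N f z := fun z hz => hGc ⟨z, hz⟩ ▸ hg ⟨z, hz⟩
  refine ⟨G, continuous_of_mem_dugundjiHull hN hf hGN ?_ hGhull, hGN, fun z => ?_⟩
  · rw [continuousOn_iff_continuous_domRestrict, show Nᶜ.domRestrict G = g from funext hGc]
    exact g.continuous
  · by_cases hz : z ∈ N
    · exact hGN hz ▸ hfC hz
    · exact dugundjiHull_subset hC hfC (hGhull z hz)

theorem exists_continuous_factor [IsTopologicalAddGroup W] [ContinuousSMul ℝ W]
    [LocallyConvexSpace ℝ W] {V : Type*} [TopologicalSpace V] {K : Set V} (hK : IsCompact K)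
    {φ : V → Z} {ψ : V → W} (hφ : ContinuousOn φ K) (hψ : ContinuousOn ψ K)
    (hfiber : ∀ x ∈ K, ∀ y ∈ K, φ x = φ y → ψ x = ψ y) {C : Set W} (hC : Convex ℝ C)
    (hCne : C.Nonempty) (hψC : MapsTo ψ K C) :
    ∃ G : Z → W, Continuous G ∧ (∀ x ∈ K, G (φ x) = ψ x) ∧ ∀ z, G z ∈ C := by
  obtain ⟨g, hg, hgψ⟩ := exists_continuousOn_factor hK hφ hψ hfiber
  obtain ⟨G, hG, hGg, hGC⟩ := exists_dugundji_extension (hK.image_of_continuousOn hφ).isClosed hg hC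
    hCne (forall_mem_image.2 fun x hx => (hgψ x hx).symm ▸ hψC hx)
  exact ⟨G, hG, fun x hx => (hGg (mem_image_of_mem φ hx)).trans (hgψ x hx), hGC⟩

theorem exists_continuous_factor_norm_le_and_map_eq_zero {E G V : Type*} [NormedAddCommGroup E]
    [NormedSpace ℝ E] [AddCommGroup G] [Module ℝ G] [TopologicalSpace G] [TopologicalSpace V]
    {K : Set V} (hK : IsCompact K) {φ : V → Z} {ψ : V → E} (hφ : ContinuousOn φ K)
    (hψ : ContinuousOn ψ K) (hfiber : ∀ x ∈ K, ∀ y ∈ K, φ x = φ y → ψ x = ψ y) {δ : ℝ}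
    (hδ : 0 ≤ δ) (hψδ : ∀ x ∈ K, ‖ψ x‖ ≤ δ) {P : E →L[ℝ] G} (hPψ : ∀ x ∈ K, P (ψ x) = 0) :
    ∃ g : Z → E, Continuous g ∧ (∀ x ∈ K, g (φ x) = ψ x) ∧ (∀ z, ‖g z‖ ≤ δ) ∧
      ∀ z, P (g z) = 0 := by
  obtain ⟨g, hg, hgψ, hgC⟩ := exists_continuous_factor hK hφ hψ hfiber
    (C := Metric.closedBall 0 δ ∩ P.ker) ((convex_closedBall 0 δ).inter P.ker.convex)
    ⟨0, by simpa using hδ, map_zero P⟩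
    fun x hx => ⟨mem_closedBall_zero_iff.2 (hψδ x hx), hPψ x hx⟩
  exact ⟨g, hg, hgψ, fun z => mem_closedBall_zero_iff.1 (hgC z).1, fun z => (hgC z).2⟩

end Dugundji

/-! ### Shears -/

section Shear

variable {R E G : Type*} [Semiring R] [NormedAddCommGroup E] [Module R E] [AddCommGroup G]
  [Module R G] [TopologicalSpace G] {P : E →L[R] G} {F : E → E} {c : NNReal}

theorem norm_sub_le_of_lipschitz_on_fiber (hc : c < 1)
    (hlip : ∀ p q, P p = P q → ‖F p - F q‖ ≤ c * ‖p - q‖) {p q : E} (hpq : P p = P q) :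
    ‖p - q‖ ≤ (1 - (c : ℝ))⁻¹ * ‖(p + F p) - (q + F q)‖ := by
  have hc' : (0 : ℝ) < 1 - c := sub_pos.2 (mod_cast hc)
  rw [inv_mul_eq_div, le_div_iff₀ hc']
  have htri : ‖p - q‖ ≤ ‖(p + F p) - (q + F q)‖ + ‖F p - F q‖ := by
    simpa [add_sub_add_comm] using norm_sub_le ((p + F p) - (q + F q)) (F p - F q)
  linarith [hlip p q hpq]

theorem map_add_shear (hPF : ∀ p, P (F p) = 0) (p : E) : P (p + F p) = P p := by
  rw [map_add, hPF, add_zero]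

theorem shear_injective (hc : c < 1) (hPF : ∀ p, P (F p) = 0)
    (hlip : ∀ p q, P p = P q → ‖F p - F q‖ ≤ c * ‖p - q‖) :
    Function.Injective fun p => p + F p := by
  intro p q (hpq : p + F p = q + F q)
  have hP : P p = P q := by rw [← map_add_shear hPF p, hpq, map_add_shear hPF]
  have := norm_sub_le_of_lipschitz_on_fiber hc hlip hP
  rw [hpq, sub_self, norm_zero, mul_zero] at this
  exact sub_eq_zero.1 (norm_le_zero_iff.1 this)

theorem shear_surjective [T1Space G] [CompleteSpace E] (hc : c < 1) (hPF : ∀ p, P (F p) = 0)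
    (hlip : ∀ p q, P p = P q → ‖F p - F q‖ ≤ c * ‖p - q‖) :
    Function.Surjective fun p => p + F p := by
  intro z
  have hcomplete : IsComplete (P ⁻¹' {P z}) :=
    (isClosed_singleton.preimage P.continuous).isComplete
  have hmaps : MapsTo (fun q => z - F q) (P ⁻¹' {P z}) (P ⁻¹' {P z}) := fun q _ => by
    simp [hPF]
  have hcontr : ContractingWith c (hmaps.restrict _ _ _) := by
    refine ⟨hc, LipschitzWith.of_dist_le_mul fun p q => ?_⟩
    simpa [Subtype.dist_eq, dist_eq_norm, norm_sub_rev] using hlip p q (p.2.trans q.2.symm)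
  obtain ⟨p, -, hp, -⟩ := hcontr.exists_fixedPoint' hcomplete hmaps rfl (edist_ne_top z _)
  exact ⟨p, (sub_eq_iff_eq_add.1 hp).symm⟩

theorem exists_shear_homeomorph [T1Space G] [CompleteSpace E] (hc : c < 1) (hF : Continuous F)
    (hPF : ∀ p, P (F p) = 0) (hlip : ∀ p q, P p = P q → ‖F p - F q‖ ≤ c * ‖p - q‖) :
    ∃ S : E ≃ₜ E, ∀ p, S p = p + F p := by
  let e : E ≃ E :=
    Equiv.ofBijective _ ⟨shear_injective hc hPF hlip, shear_surjective hc hPF hlip⟩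
  refine ⟨⟨e, continuous_id.add hF, continuous_iff_continuousAt.2 fun z => ?_⟩, fun p => rfl⟩
  set p := e.symm z
  have hz : p + F p = z := e.apply_symm_apply z
  -- `p + (z' - z)` lies in the fiber of `P` through `e.symm z'` and tends to `p` as `z' → z`.
  have hbound : ∀ z', dist (e.symm z') (p + (z' - z)) ≤
      (1 - (c : ℝ))⁻¹ * ‖F p - F (p + (z' - z))‖ := by
    intro z'
    have hz' : e.symm z' + F (e.symm z') = z' := e.apply_symm_apply z'
    have hfiber : P (e.symm z') = P (p + (z' - z)) := by
      rw [← map_add_shear hPF (e.symm z'), hz', map_add, map_sub, ← hz, map_add_shear hPF p,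
        add_sub_cancel]
    have := norm_sub_le_of_lipschitz_on_fiber hc hlip hfiber
    rwa [hz', show z' - (p + (z' - z) + F (p + (z' - z))) = z - p - F (p + (z' - z)) by abel,
      sub_eq_of_eq_add' hz.symm, ← dist_eq_norm] at this
  have hp_tendsto : Filter.Tendsto (fun z' => p + (z' - z)) (𝓝 z) (𝓝 p) :=
    Continuous.tendsto' (by fun_prop) _ _ (by simp)
  have hbound_tendsto :
      Filter.Tendsto (fun z' => (1 - (c : ℝ))⁻¹ * ‖F p - F (p + (z' - z))‖) (𝓝 z) (𝓝 0) :=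
    Continuous.tendsto' (by fun_prop) _ _ (by simp)
  exact (tendsto_iff_of_dist
    (squeeze_zero (fun _ => dist_nonneg) hbound hbound_tendsto)).2 hp_tendsto

theorem exists_shear_homeomorph_comp [T1Space G] [CompleteSpace E] {g : G → E} (hg : Continuous g)
    (hPg : ∀ y, P (g y) = 0) : ∃ S : E ≃ₜ E, ∀ p, S p = p + g (P p) :=
  exists_shear_homeomorph (c := 0) zero_lt_one (hg.comp P.continuous) (fun _ => hPg _)
    fun p q h => by simp [h]

end Shear

section LocalizedShear

variable {E G : Type*} [NormedAddCommGroup E] [NormedSpace ℝ E] [CompleteSpace E] [AddCommGroup G]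
  [Module ℝ G] [TopologicalSpace G] [T1Space G] {P : E →L[ℝ] G} {g : G → E}

theorem exists_smul_shear_homeomorph (hg : Continuous g) (hPg : ∀ y, P (g y) = 0) {b k : NNReal}
    (hgb : ∀ y, ‖g y‖ ≤ b) {χ : E → ℝ} (hχ : LipschitzWith k χ) (hkb : k * b < 1) :
    ∃ S : E ≃ₜ E, ∀ p, S p = p + χ p • g (P p) := by
  have hχc := hχ.continuous
  refine exists_shear_homeomorph (P := P) (F := fun p => χ p • g (P p)) hkb (by fun_prop)
    (fun p => by rw [map_smul, hPg, smul_zero]) fun p q h => ?_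
  calc ‖χ p • g (P p) - χ q • g (P q)‖ = ‖χ p - χ q‖ * ‖g (P q)‖ := by
        rw [h, ← sub_smul, norm_smul]
    _ ≤ k * ‖p - q‖ * b := mul_le_mul (hχ.norm_sub_le p q) (hgb _) (norm_nonneg _) (by positivity)
    _ = ↑(k * b) * ‖p - q‖ := by push_cast; ring

theorem exists_localized_shear_homeomorph (A : Set E) {ε : ℝ} (hε : 0 < ε) (hg : Continuous g)
    (hPg : ∀ y, P (g y) = 0) (hgε : ∀ y, ‖g y‖ ≤ ε / 2) :
    ∃ S : E ≃ₜ E, (∀ p, p ∈ Metric.cthickening ε A ∨ g (P p) = 0 → S p = p + g (P p)) ∧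
      (∀ p ∉ Metric.thickening (2 * ε) A, S p = p) ∧ ∀ p, dist (S p) p ≤ ε / 2 := by
  let χ := thickenedIndicator hε (Metric.cthickening ε A)
  have hχ_one : ∀ p, (χ p : ℝ) ≤ 1 := fun p => thickenedIndicator_le_one hε _ p
  have hχ : LipschitzWith ε.toNNReal⁻¹ fun p => (χ p : ℝ) := lipschitzWith_thickenedIndicator hε _
  obtain ⟨S, hS⟩ := exists_smul_shear_homeomorph (b := (ε / 2).toNNReal) (χ := fun p => (χ p : ℝ))
    hg hPg (fun y => (hgε y).trans (Real.le_coe_toNNReal _))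
    hχ (by
      rw [Real.toNNReal_div hε.le, Real.toNNReal_ofNat, ← mul_div_assoc,
        inv_mul_cancel₀ (Real.toNNReal_pos.2 hε).ne']
      exact one_half_lt_one)
  refine ⟨S, ?_, fun p hp => ?_, fun p => ?_⟩
  · rintro p (hp | hp)
    · rw [hS, show χ p = 1 from thickenedIndicator_one hε _ hp, NNReal.coe_one, one_smul]
    · rw [hS, hp, smul_zero]
  · have hp' : p ∉ Metric.thickening ε (Metric.cthickening ε A) := fun h =>
      hp (two_mul ε ▸ Metric.thickening_cthickening_subset ε hε.le A h)
    rw [hS, show χ p = 0 from thickenedIndicator_zero hε _ hp', NNReal.coe_zero, zero_smul,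
      add_zero]
  · rw [hS, dist_self_add_left, norm_smul, NNReal.norm_eq]
    exact (mul_le_of_le_one_left (norm_nonneg _) (hχ_one p)).trans (hgε _)

end LocalizedShear

/-! ### Coordinate projections of `ℓ₂` -/

section CoordProj

variable {ι : Type*} {J J' : Set ι}

theorem l2_norm_mono {x y : l2Space ι} (h : ∀ i, |(y : ι → ℝ) i| ≤ |(x : ι → ℝ) i|) :
    ‖y‖ ≤ ‖x‖ := by
  refine lp.norm_le_of_forall_sum_le (by simp) (norm_nonneg _) fun s => ?_
  refine (Finset.sum_le_sum fun i _ => ?_).trans (lp.sum_rpow_le_norm_rpow (by simp) x s)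
  exact Real.rpow_le_rpow (norm_nonneg _) (h i) (by simp)

theorem l2_abs_apply_le (x : l2Space ι) (i : ι) : |(x : ι → ℝ) i| ≤ ‖x‖ :=
  lp.norm_apply_le_norm (by simp) x i

theorem memℓp_two_indicator (J : Set ι) (x : l2Space ι) :
    Memℓp (J.indicator (x : ι → ℝ)) 2 := by
  have hx := lp.memℓp x
  have htwo : 0 < (2 : ENNReal).toReal := by simp
  rw [memℓp_gen_iff htwo] at hx ⊢
  exact hx.of_nonneg_of_le (fun i => by positivity) fun i =>
    Real.rpow_le_rpow (norm_nonneg _) (norm_indicator_le_norm_self _ _) htwo.le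

/-- The coordinate projection of `ℓ₂(ι)` that keeps the coordinates in `J` and sets the others to
`0`. -/
def coordProj (J : Set ι) : l2Space ι →L[ℝ] l2Space ι :=
  LinearMap.mkContinuous
    { toFun := fun x => ⟨J.indicator (x : ι → ℝ), memℓp_two_indicator J x⟩
      map_add' := fun x y => lp.ext (indicator_add J (x : ι → ℝ) (y : ι → ℝ))
      map_smul' := fun c x => lp.ext (indicator_const_smul J c (x : ι → ℝ)) } 1 fun x =>
    (l2_norm_mono fun i => norm_indicator_le_norm_self (s := J) (x : ι → ℝ) i).trans_eq
      (one_mul _).symm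

theorem coordProj_apply (J : Set ι) (x : l2Space ι) (i : ι) :
    (coordProj J x : ι → ℝ) i = J.indicator (x : ι → ℝ) i := rfl

theorem coordProj_apply_mem (x : l2Space ι) {i : ι} (hi : i ∈ J) :
    (coordProj J x : ι → ℝ) i = (x : ι → ℝ) i := indicator_of_mem hi _

theorem coordProj_apply_notMem (x : l2Space ι) {i : ι} (hi : i ∉ J) :
    (coordProj J x : ι → ℝ) i = 0 := indicator_of_notMem hi _

theorem coordProj_eq_zero_iff {x : l2Space ι} :
    coordProj J x = 0 ↔ ∀ i ∈ J, (x : ι → ℝ) i = 0 := by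
  refine ⟨fun h i hi => ?_, fun h => lp.ext (funext fun i => indicator_apply_eq_zero.2 (h i))⟩
  rw [← coordProj_apply_mem x hi, h]
  rfl

theorem coordProj_coordProj (J J' : Set ι) (x : l2Space ι) :
    coordProj J (coordProj J' x) = coordProj (J ∩ J') x :=
  lp.ext (indicator_indicator _ _ _)

theorem coordProj_idem (J : Set ι) (x : l2Space ι) :
    coordProj J (coordProj J x) = coordProj J x := by
  rw [coordProj_coordProj, inter_self]

theorem coordProj_of_disjoint (h : Disjoint J J') (x : l2Space ι) :
    coordProj J (coordProj J' x) = 0 :=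
  coordProj_eq_zero_iff.2 fun _ hi => coordProj_apply_notMem x (h.notMem_of_mem_left hi)

theorem coordProj_compl (J : Set ι) (x : l2Space ι) : coordProj Jᶜ x = x - coordProj J x :=
  lp.ext (indicator_compl _ _)

theorem norm_coordProj_le (J : Set ι) (x : l2Space ι) : ‖coordProj J x‖ ≤ ‖x‖ :=
  l2_norm_mono fun i => norm_indicator_le_norm_self (s := J) (x : ι → ℝ) i

theorem norm_coordProj_mono (h : J ⊆ J') (x : l2Space ι) :
    ‖coordProj J x‖ ≤ ‖coordProj J' x‖ := by
  rw [← inter_eq_left.2 h, ← coordProj_coordProj]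
  exact norm_coordProj_le J _

theorem exists_finset_norm_coordProj_compl_lt (x : l2Space ι) {ε : ℝ} (hε : 0 < ε) :
    ∃ S : Finset ι, ‖coordProj (S : Set ι)ᶜ x‖ < ε := by
  classical
  obtain ⟨S, hS⟩ := (Metric.tendsto_atTop.1 (lp.hasSum_single (p := 2) (by simp) x)) ε hε
  have hSx : ∑ i ∈ S, lp.single 2 i ((x : ι → ℝ) i) = coordProj S x := by
    ext j
    rw [lp.coeFn_sum, Finset.sum_apply, coordProj_apply, indicator_apply]
    simp [lp.single_apply, Pi.single_apply]
  refine ⟨S, ?_⟩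
  rw [coordProj_compl, ← hSx, norm_sub_rev, ← dist_eq_norm]
  exact hS S le_rfl

theorem exists_finset_forall_norm_coordProj_compl_lt {K : Set (l2Space ι)} (hK : IsCompact K)
    {ε : ℝ} (hε : 0 < ε) : ∃ S : Finset ι, ∀ x ∈ K, ‖coordProj (S : Set ι)ᶜ x‖ < ε :=
  hK.elim_directed_cover (fun S : Finset ι => {x | ‖coordProj (S : Set ι)ᶜ x‖ < ε})
    (fun _ => isOpen_lt (by fun_prop) continuous_const)
    (fun x _ => mem_iUnion.2 (exists_finset_norm_coordProj_compl_lt x hε))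
    (directed_of_isDirected_le fun _ _ hST x hx =>
      (norm_coordProj_mono (compl_subset_compl.2 (mod_cast hST)) x).trans_lt hx)

end CoordProj

/-! ### Making a compact set deficient -/

theorem exists_injective_forall_notMem {ι : Type*} [Infinite ι] (T : ℕ → Finset ι) :
    ∃ w : ℕ → ι, Function.Injective w ∧ ∀ k, w k ∉ T k := by
  let f := Infinite.natEmbedding ι
  have hfin : ∀ n, ∀ᶠ k in Filter.atTop, f k ∉ T n := fun n => by
    rw [← Nat.cofinite_eq_atTop]
    exact ((T n).finite_toSet.preimage f.injective.injOn).compl_mem_cofinite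
  obtain ⟨φ, hφ, h⟩ := Filter.extraction_forall_of_eventually hfin
  exact ⟨f ∘ φ, f.injective.comp hφ.injective, h⟩

theorem exists_l2Space_map_of_coords {ι V : Type*} [TopologicalSpace V] {w : ℕ → ι}
    (hw : Function.Injective w) {η : ℕ → ℝ} (hη : Summable η) {u : ℕ → V → ℝ}
    (hu : ∀ n, Continuous (u n)) (huη : ∀ n x, |u n x| ≤ η n) :
    ∃ Φ : V → l2Space ι, Continuous Φ ∧ (∀ x, ‖Φ x‖ ≤ ∑' n, η n) ∧
      (∀ x n, (Φ x : ι → ℝ) (w n) = u n x) ∧ ∀ x, ∀ i ∉ range w, (Φ x : ι → ℝ) i = 0 := by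
  classical
  let e : ℕ → l2Space ι := fun n => lp.single 2 (w n) 1
  have hbound : ∀ n x, ‖u n x • e n‖ ≤ η n := fun n x => by
    simpa [e, norm_smul, lp.norm_single] using huη n x
  have hcoord : ∀ x i, (∑' n, u n x • e n : l2Space ι) i = ∑' n, u n x * (e n : ι → ℝ) i :=
    fun x i => (lp.evalCLM ℝ (fun _ : ι => ℝ) 2 i).map_tsum (.of_norm_bounded hη (hbound · x))
  refine ⟨fun x => ∑' n, u n x • e n, continuous_tsum (fun n => by fun_prop) hη hbound,
    fun x => tsum_of_norm_bounded hη.hasSum (hbound · x), fun x n => ?_, fun x i hi => ?_⟩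
  · rw [hcoord, tsum_eq_single n fun m hm => ?_]
    · simp [e, lp.single_apply]
    · simp [e, lp.single_apply, hw.ne hm.symm]
  · have hzero : ∀ n, (e n : ι → ℝ) i = 0 := fun n =>
      lp.single_apply_ne _ _ _ fun h => hi ⟨n, h.symm⟩
    simp [hcoord, hzero]

theorem exists_separating_seq {V : Type*} [MetricSpace V] {K : Set V}
    (hK : TopologicalSpace.IsSeparable K) :
    ∃ u : ℕ → V → ℝ, (∀ n, Continuous (u n)) ∧ (∀ n x, 0 ≤ u n x ∧ u n x ≤ 1) ∧
      ∀ x ∈ K, ∀ y ∈ K, x ≠ y → ∃ n, u n x = 0 ∧ u n y = 1 := by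
  rcases K.eq_empty_or_nonempty with rfl | hne
  · exact ⟨fun _ _ => 0, fun _ => continuous_const, by simp, by simp⟩
  obtain ⟨c, hc, hKc⟩ := hK
  obtain ⟨m, rfl⟩ := hc.exists_eq_range (closure_nonempty_iff.1 (hne.mono hKc))
  let v : ℕ × ℕ → V → ℝ := fun p x => max 0 (min 1 ((p.2 : ℝ) * dist x (m p.1) - 1))
  refine ⟨fun n => v n.unpair, fun n => by fun_prop,
    fun n x => ⟨le_max_left _ _, max_le zero_le_one (min_le_left _ _)⟩, fun x hx y _ hxy => ?_⟩
  obtain ⟨r, hr⟩ := exists_nat_gt (3 / dist x y)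
  have hr0 : (0 : ℝ) < r := (by positivity : 0 ≤ 3 / dist x y).trans_lt hr
  rw [div_lt_iff₀ (dist_pos.2 hxy)] at hr
  obtain ⟨_, ⟨k, rfl⟩, hk⟩ := Metric.mem_closure_iff.1 (hKc hx) (1 / r) (by positivity)
  rw [lt_div_iff₀ hr0] at hk
  have htri : (r : ℝ) * dist x y ≤ r * (dist x (m k) + dist y (m k)) :=
    mul_le_mul_of_nonneg_left (dist_triangle_right x y (m k)) hr0.le
  refine ⟨Nat.pair k r, ?_, ?_⟩ <;> simp only [Nat.unpair_pair, v]
  · exact max_eq_left ((min_le_right _ _).trans (by linarith))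
  · rw [min_eq_left (by linarith), max_eq_right zero_le_one]

section Deficiency

variable {ι : Type*} {J : Set ι} {L : Set (l2Space ι)}

theorem exists_infinite_and_seq_small_coords [Infinite ι] (hL : IsCompact L) {ε : ℝ} (hε : 0 < ε)
    {η : ℕ → ℝ} (hη : ∀ k, 0 < η k) :
    ∃ (J : Set ι) (w : ℕ → ι), J.Infinite ∧ Function.Injective w ∧ (∀ k, w k ∉ J) ∧
      ∀ x ∈ L, ‖coordProj J x‖ ≤ ε ∧ ∀ k, |(x : ι → ℝ) (w k)| < η k := by
  classical
  obtain ⟨S, hS⟩ := exists_finset_forall_norm_coordProj_compl_lt hL hε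
  choose T hT using fun k => exists_finset_forall_norm_coordProj_compl_lt hL (hη k)
  obtain ⟨v, hv, hvST⟩ := exists_injective_forall_notMem fun k => S ∪ T (k / 2)
  refine ⟨range fun k => v (2 * k), fun k => v (2 * k + 1),
    infinite_range_of_injective (hv.comp fun a b h => by grind), hv.comp fun a b h => by grind,
    ?_, fun x hx => ⟨?_, fun k => ?_⟩⟩
  · rintro k ⟨m, hm⟩
    have := hv hm
    lia
  · refine (norm_coordProj_mono (range_subset_iff.2 fun k => ?_) x).trans (hS x hx).le
    exact fun hk => hvST (2 * k) (Finset.mem_union_left _ hk)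
  · have hk : v (2 * k + 1) ∈ (T k : Set ι)ᶜ := fun h =>
      hvST (2 * k + 1) (Finset.mem_union_right _ (by rwa [show (2 * k + 1) / 2 = k by lia]))
    rw [← coordProj_apply_mem x hk]
    exact (l2_abs_apply_le _ _).trans_lt (hT k x hx)

/-- At the coordinate `w k` the value of `Φ` is either `0` or `4 * η k`, and the noise coming from a
point of `L` is less than `η k`; hence `Φ` can be read off the coordinates outside `J`. -/
theorem exists_recording_map (hL : IsCompact L) {w : ℕ → ι} (hw : Function.Injective w)
    (hwJ : ∀ k, w k ∉ J) {η : ℕ → ℝ} (hη : ∀ k, 0 < η k) (hηs : Summable η)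
    (hLw : ∀ x ∈ L, ∀ k, |(x : ι → ℝ) (w k)| < η k) :
    ∃ Φ : l2Space ι → l2Space ι, Continuous Φ ∧ (∀ y, ‖Φ y‖ ≤ 4 * ∑' k, η k) ∧
      (∀ y, coordProj J (Φ y) = 0) ∧
      ∀ x ∈ L, ∀ y ∈ L, coordProj Jᶜ x + Φ (coordProj J x) = coordProj Jᶜ y + Φ (coordProj J y) →
        coordProj J x = coordProj J y := by
  obtain ⟨u, huc, hu01, husep⟩ :=
    exists_separating_seq (hL.image (coordProj J).continuous).isSeparable
  obtain ⟨Φ, hΦc, hΦn, hΦw, hΦ0⟩ := exists_l2Space_map_of_coords hw (hηs.mul_left 4)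
    (fun n => (huc n).const_mul (4 * η n)) (fun n x => by
      rw [abs_of_nonneg (mul_nonneg (by linarith [hη n]) (hu01 n x).1)]
      exact mul_le_of_le_one_right (by linarith [hη n]) (hu01 n x).2)
  refine ⟨Φ, hΦc, fun y => (hΦn y).trans_eq tsum_mul_left,
    fun y => coordProj_eq_zero_iff.2 fun i hi => hΦ0 y i ?_, fun x hx y hy hxy => ?_⟩
  · rintro ⟨k, rfl⟩
    exact hwJ k hi
  by_contra hne
  obtain ⟨n, hn0, hn1⟩ := husep _ (mem_image_of_mem _ hx) _ (mem_image_of_mem _ hy) hne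
  have hwn : w n ∈ Jᶜ := hwJ n
  have hcoord := congrArg (fun z : l2Space ι => (z : ι → ℝ) (w n)) hxy
  simp only [lp.coeFn_add, Pi.add_apply, coordProj_apply_mem _ hwn, hΦw, hn0, hn1] at hcoord
  linarith [(abs_lt.1 (hLw x hx n)).2, (abs_lt.1 (hLw y hy n)).1, hη n]

/-- A composition of two shears: the first adds to a point a record of its `J`-part in the
coordinates outside `J`, after which the `J`-part of a point of `L` is a function of its other
coordinates, and the second subtracts that function. -/
theorem exists_homeomorph_coordProj_eq_zero_of_recording (hL : IsCompact L) {δ : ℝ}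
    (hLJ : ∀ x ∈ L, ‖coordProj J x‖ ≤ δ) (hδ : 0 ≤ δ) {Φ : l2Space ι → l2Space ι}
    (hΦ : Continuous Φ) (hΦJ : ∀ y, coordProj J (Φ y) = 0) (hΦn : ∀ y, ‖Φ y‖ ≤ δ)
    (hrec : ∀ x ∈ L, ∀ y ∈ L,
      coordProj Jᶜ x + Φ (coordProj J x) = coordProj Jᶜ y + Φ (coordProj J y) →
        coordProj J x = coordProj J y) :
    ∃ μ : l2Space ι ≃ₜ l2Space ι,
      (∀ x, dist (μ x) x ≤ δ + δ) ∧ ∀ x ∈ L, coordProj J (μ x) = 0 := by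
  obtain ⟨σ, hσ⟩ := exists_shear_homeomorph_comp (P := coordProj J) hΦ hΦJ
  obtain ⟨f, hf, hfL, hfn, hfJ⟩ := exists_continuous_factor_norm_le_and_map_eq_zero hL
    (φ := fun x => coordProj Jᶜ x + Φ (coordProj J x)) (ψ := coordProj J) (by fun_prop)
    (by fun_prop) hrec hδ hLJ (P := coordProj Jᶜ) fun x _ =>
      coordProj_of_disjoint disjoint_compl_left x
  obtain ⟨τ, hτ⟩ := exists_shear_homeomorph_comp (P := coordProj Jᶜ) hf.neg fun y => by
    rw [Pi.neg_apply, map_neg, hfJ, neg_zero]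
  have hμ : ∀ x, (σ.trans τ) x = x + Φ (coordProj J x) -
      f (coordProj Jᶜ x + Φ (coordProj J x)) := fun x => by
    rw [Homeomorph.trans_apply, hτ, hσ, map_add, coordProj_compl J (Φ _), hΦJ, sub_zero,
      Pi.neg_apply, sub_eq_add_neg]
  refine ⟨σ.trans τ, fun x => ?_, fun x hx => ?_⟩
  · rw [hμ, dist_eq_norm, add_sub_assoc, add_sub_cancel_left]
    exact (norm_sub_le _ _).trans (add_le_add (hΦn _) (hfn _))
  · rw [hμ, hfL x hx, map_sub, map_add, hΦJ, coordProj_idem, add_zero, sub_self]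

theorem exists_homeomorph_coordProj_eq_zero [Infinite ι] (hL : IsCompact L) {ε : ℝ} (hε : 0 < ε) :
    ∃ J : Set ι, J.Infinite ∧ ∃ μ : l2Space ι ≃ₜ l2Space ι,
      (∀ x, dist (μ x) x ≤ ε) ∧ ∀ x ∈ L, coordProj J (μ x) = 0 := by
  let η : ℕ → ℝ := fun k => ε / 8 / 2 / 2 ^ k
  obtain ⟨J, w, hJ, hw, hwJ, hsmall⟩ :=
    exists_infinite_and_seq_small_coords hL (half_pos hε) (η := η) fun k => by positivity
  obtain ⟨Φ, hΦ, hΦn, hΦJ, hrec⟩ := exists_recording_map hL hw hwJ (fun k => by positivity)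
    (summable_geometric_two' (ε / 8)) fun x hx => (hsmall x hx).2
  have hΦn' : ∀ y, ‖Φ y‖ ≤ ε / 2 := fun y => (hΦn y).trans_eq (by
    rw [tsum_geometric_two']
    ring)
  obtain ⟨μ, hμ, hμL⟩ := exists_homeomorph_coordProj_eq_zero_of_recording hL
    (fun x hx => (hsmall x hx).1) (by positivity) hΦ hΦJ hΦn' hrec
  exact ⟨J, hJ, μ, fun x => (hμ x).trans_eq (add_halves ε), hμL⟩

end Deficiency

/-! ### Unknotting of compacta -/

theorem exists_bounded_continuous_seq_separating_off {V : Type*} [MetricSpace V] {K D : Set V}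
    (hK : TopologicalSpace.IsSeparable K) (hD : IsClosed D) :
    ∃ v : ℕ → V → ℝ, (∀ n, Continuous (v n)) ∧ (∀ n x, |v n x| ≤ 1) ∧
      (∀ n, ∀ x ∈ D, v n x = 0) ∧
      ∀ x ∈ K, ∀ y ∈ K, (∀ n, v n x = v n y) → x ∈ D ∧ y ∈ D ∨ x = y := by
  obtain ⟨u, hu, hu01, husep⟩ := exists_separating_seq hK
  obtain ⟨ρ, hρD, hρ⟩ :=
    perfectlyNormalSpace_iff_forall_isClosed_preimage_zero.1 inferInstance D hD
  have hρ0 : ∀ x, x ∈ D ↔ ρ x = 0 := fun x => by rw [hρD]; rfl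
  -- The functions are `ρ, ρ * u 0, ρ * u 1, …`: off `D` they determine every `u m x`.
  refine ⟨fun n => n.casesOn ρ fun m x => ρ x * u m x, ?_, ?_, ?_, fun x hx y hy hxy => ?_⟩
  · rintro (- | m)
    exacts [ρ.continuous, ρ.continuous.mul (hu m)]
  · rintro (- | m) x
    · exact abs_le.2 ⟨neg_one_lt_zero.le.trans (hρ x).1, (hρ x).2⟩
    · exact abs_le.2 ⟨neg_one_lt_zero.le.trans (mul_nonneg (hρ x).1 (hu01 m x).1),
        mul_le_one₀ (hρ x).2 (hu01 m x).1 (hu01 m x).2⟩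
  · rintro (- | m) x hx
    · exact (hρ0 x).1 hx
    · exact mul_eq_zero_of_left ((hρ0 x).1 hx) _
  · have hρxy : ρ x = ρ y := hxy 0
    have huxy : ∀ m, ρ x * u m x = ρ y * u m y := fun m => hxy (m + 1)
    refine or_iff_not_imp_right.2 fun hne => ?_
    obtain ⟨n, hnx, hny⟩ := husep x hx y hy hne
    have hρy : ρ y = 0 := by simpa [hnx, hny] using (huxy n).symm
    exact ⟨(hρ0 x).2 (hρxy.trans hρy), (hρ0 y).2 hρy⟩

theorem exists_tagging_map {ι V : Type*} [MetricSpace V] {J : Set ι} (hJ : J.Infinite)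
    {K D : Set V} (hK : TopologicalSpace.IsSeparable K) (hD : IsClosed D) {δ : ℝ} (hδ : 0 < δ) :
    ∃ j : V → l2Space ι, Continuous j ∧ (∀ x, ‖j x‖ ≤ δ) ∧ (∀ x, coordProj Jᶜ (j x) = 0) ∧
      (∀ x ∈ D, j x = 0) ∧ ∀ x ∈ K, ∀ y ∈ K, j x = j y → x ∈ D ∧ y ∈ D ∨ x = y := by
  obtain ⟨v, hv, hv1, hvD, hvsep⟩ := exists_bounded_continuous_seq_separating_off hK hD
  let η : ℕ → ℝ := fun k => δ / 2 / 2 ^ k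
  have hη : ∀ k, 0 < η k := fun k => by positivity
  let w := hJ.natEmbedding
  obtain ⟨j, hj, hjn, hjw, hj0⟩ := exists_l2Space_map_of_coords (w := fun k => (w k : ι))
    (Subtype.val_injective.comp w.injective) (summable_geometric_two' δ)
    (fun n => (hv n).const_mul (η n)) (fun n x => by
      rw [abs_mul, abs_of_pos (hη n)]
      exact mul_le_of_le_one_right (hη n).le (hv1 n x))
  refine ⟨j, hj, fun x => (hjn x).trans_eq (tsum_geometric_two' δ),
    fun x => coordProj_eq_zero_iff.2 fun i hi => hj0 x i ?_, fun x hx => ?_,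
    fun x hx y hy hxy => hvsep x hx y hy fun n => ?_⟩
  · rintro ⟨k, rfl⟩
    exact hi (w k).2
  · ext i
    by_cases hi : i ∈ range fun k => (w k : ι)
    · obtain ⟨k, rfl⟩ := hi
      rw [hjw, hvD k x hx, mul_zero]
      rfl
    · exact hj0 x i hi
  · exact mul_left_cancel₀ (hη n).ne' (by rw [← hjw, ← hjw, hxy])

section Unknotting

variable {ι : Type*} {J : Set ι} {K D : Set (l2Space ι)} {h : l2Space ι → l2Space ι} {ε : ℝ}

theorem coordProj_compl_eq_self {x : l2Space ι} (hx : coordProj J x = 0) :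
    coordProj Jᶜ x = x := by
  rw [coordProj_compl, hx, sub_zero]

/-- Klee's trick: `h` is the composition `x ↦ x + j x ↦ h x + j x ↦ h x` of localized shears. -/
theorem exists_homeomorph_of_shear_factors {j g f : l2Space ι → l2Space ι} (hε : 0 < ε)
    (hj : Continuous j) (hjn : ∀ x, ‖j x‖ ≤ ε / 2) (hjJ : ∀ x, coordProj Jᶜ (j x) = 0)
    (hg : Continuous g) (hgn : ∀ x, ‖g x‖ ≤ ε / 2) (hgJ : ∀ x, coordProj J (g x) = 0)
    (hf : Continuous f) (hfn : ∀ x, ‖f x‖ ≤ ε / 2) (hfJ : ∀ x, coordProj Jᶜ (f x) = 0)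
    (hJK : ∀ x ∈ K, coordProj J x = 0) (hJh : ∀ x ∈ K, coordProj J (h x) = 0)
    (hjD : ∀ x ∈ D, j x = 0) (hDid : ∀ x ∈ K ∩ D, h x = x)
    (hgK : ∀ x ∈ K, g (j x) = h x - x) (hfK : ∀ x ∈ K, f (h x) = -j x) :
    ∃ θ : l2Space ι ≃ₜ l2Space ι, (∀ x ∈ K, θ x = h x) ∧
      (∀ p ∉ Metric.thickening (2 * ε) (K \ D), θ p = p) ∧ ∀ p, dist (θ p) p ≤ 3 * ε / 2 := by
  have hJj : ∀ x, coordProj J (j x) = j x := fun x => by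
    simpa only [compl_compl] using coordProj_compl_eq_self (hjJ x)
  have hJcK : ∀ x ∈ K, coordProj Jᶜ x = x := fun x hx => coordProj_compl_eq_self (hJK x hx)
  have hJch : ∀ x ∈ K, coordProj Jᶜ (h x) = h x := fun x hx => coordProj_compl_eq_self (hJh x hx)
  have hnear : ∀ x ∈ K, dist (h x) x ≤ ε / 2 := fun x hx => by
    rw [dist_eq_norm, ← hgK x hx]
    exact hgn _
  -- A vector that vanishes when `x ∈ D` may be added by a localized shear at any point near `x`.
  have hlocal : ∀ {x p v : l2Space ι}, x ∈ K → dist p x ≤ ε → (x ∈ D → v = 0) →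
      p ∈ Metric.cthickening ε (K \ D) ∨ v = 0 := fun {x p v} hx hp hv =>
    or_iff_not_imp_right.2 fun hv0 =>
      Metric.mem_cthickening_of_dist_le p x ε _ ⟨hx, fun hxD => hv0 (hv hxD)⟩ hp
  obtain ⟨S, hS, hSA, hSn⟩ := exists_localized_shear_homeomorph (K \ D) hε hj hjJ hjn
  obtain ⟨T, hT, hTA, hTn⟩ := exists_localized_shear_homeomorph (K \ D) hε hg hgJ hgn
  obtain ⟨U, hU, hUA, hUn⟩ := exists_localized_shear_homeomorph (K \ D) hε hf hfJ hfn
  refine ⟨(S.trans T).trans U, fun x hx => ?_, fun p hp => ?_, fun p => ?_⟩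
  · have hSx : S x = x + j x := by
      rw [hS, hJcK x hx]
      exact hlocal hx (by simpa using hε.le) fun hxD => by rw [hJcK x hx, hjD x hxD]
    have hgx : g (coordProj J (x + j x)) = h x - x := by
      rw [map_add, hJK x hx, zero_add, hJj, hgK x hx]
    have hTx : T (x + j x) = h x + j x := by
      rw [hT, hgx]
      · abel
      · exact hlocal hx (by simpa using (hjn x).trans (by linarith)) fun hxD => by
          rw [hgx, hDid x ⟨hx, hxD⟩, sub_self]
    have hfx : f (coordProj Jᶜ (h x + j x)) = -j x := by
      rw [map_add, hJch x hx, hjJ, add_zero, hfK x hx]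
    have hUx : U (h x + j x) = h x := by
      rw [hU, hfx, add_neg_cancel_right]
      refine hlocal hx ((dist_triangle _ (h x) _).trans ?_) fun hxD => by
        rw [hfx, hjD x hxD, neg_zero]
      rw [dist_self_add_left]
      linarith [hjn x, hnear x hx]
    rw [Homeomorph.trans_apply, Homeomorph.trans_apply, hSx, hTx, hUx]
  · rw [Homeomorph.trans_apply, Homeomorph.trans_apply, hSA p hp, hTA p hp, hUA p hp]
  · rw [Homeomorph.trans_apply, Homeomorph.trans_apply]
    linarith [dist_triangle4 (U (T (S p))) (T (S p)) (S p) p, hSn p, hTn (S p), hUn (T (S p))]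

theorem exists_homeomorph_extending_of_coordProj_eq_zero (hJ : J.Infinite) (hK : IsCompact K)
    (hD : IsClosed D) (hc : ContinuousOn h K) (hi : InjOn h K) (hDid : ∀ x ∈ K ∩ D, h x = x)
    (hJK : ∀ x ∈ K, coordProj J x = 0) (hJh : ∀ x ∈ K, coordProj J (h x) = 0) (hε : 0 < ε)
    (hnear : ∀ x ∈ K, dist (h x) x ≤ ε / 2) :
    ∃ θ : l2Space ι ≃ₜ l2Space ι, (∀ x ∈ K, θ x = h x) ∧
      (∀ p ∉ Metric.thickening (2 * ε) (K \ D), θ p = p) ∧ ∀ p, dist (θ p) p ≤ 3 * ε / 2 := by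
  obtain ⟨j, hj, hjn, hjJ, hjD, hjsep⟩ := exists_tagging_map hJ hK.isSeparable hD (half_pos hε)
  obtain ⟨g, hg, hgK, hgn, hgJ⟩ := exists_continuous_factor_norm_le_and_map_eq_zero hK
    (ψ := fun x => h x - x) hj.continuousOn (hc.sub continuousOn_id) (fun x hx y hy hxy => by
      rcases hjsep x hx y hy hxy with ⟨hxD, hyD⟩ | rfl
      · simp [hDid x ⟨hx, hxD⟩, hDid y ⟨hy, hyD⟩]
      · rfl) (half_pos hε).le (fun x hx => by simpa [dist_eq_norm] using hnear x hx)
    (P := coordProj J) fun x hx => by simp [hJK x hx, hJh x hx]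
  obtain ⟨f, hf, hfK, hfn, hfJ⟩ := exists_continuous_factor_norm_le_and_map_eq_zero hK hc
    (ψ := fun x => -j x) hj.continuousOn.neg (fun x hx y hy hxy => by rw [hi hx hy hxy])
    (half_pos hε).le (fun x _ => by simpa using hjn x) (P := coordProj Jᶜ) fun x _ => by simp [hjJ]
  exact exists_homeomorph_of_shear_factors hε hj hjn hjJ hg hgn hgJ hf hfn hfJ hJK hJh hjD hDid hgK
    hfK

theorem dist_conj_le {V : Type*} [PseudoMetricSpace V] {μ θ : V ≃ₜ V} {δ s : ℝ}
    (hμ : ∀ x, dist (μ x) x ≤ δ) (hθ : ∀ x, dist (θ x) x ≤ s) (x : V) :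
    dist (μ.symm (θ (μ x))) x ≤ s + 2 * δ := by
  have hμ' : dist (θ (μ x)) (μ.symm (θ (μ x))) ≤ δ := by simpa using hμ (μ.symm (θ (μ x)))
  rw [dist_comm] at hμ'
  linarith [dist_triangle4 (μ.symm (θ (μ x))) (θ (μ x)) (μ x) x, hμ x, hθ (μ x)]

theorem conj_eq_self_of_notMem_thickening {V : Type*} [PseudoMetricSpace V] {μ θ : V ≃ₜ V}
    {A : Set V} {δ r : ℝ} (hμ : ∀ x, dist (μ x) x ≤ δ)
    (hθ : ∀ p ∉ Metric.thickening r (μ '' A), θ p = p) {p : V}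
    (hp : p ∉ Metric.thickening (r + 2 * δ) A) : μ.symm (θ (μ p)) = p := by
  rw [hθ, μ.symm_apply_apply]
  intro hp'
  obtain ⟨_, ⟨a, ha, rfl⟩, hpa⟩ := Metric.mem_thickening_iff.1 hp'
  refine hp (Metric.mem_thickening_iff.2 ⟨a, ha, ?_⟩)
  linarith [dist_triangle4_left (μ p) (μ a) p a, hμ p, hμ a]

theorem exists_homeomorph_extending [Infinite ι] (hK : IsCompact K) (hD : IsClosed D)
    (hc : ContinuousOn h K) (hi : InjOn h K) (hDid : ∀ x ∈ K ∩ D, h x = x) (hε : 0 < ε)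
    (hnear : ∀ x ∈ K, dist (h x) x ≤ ε / 10) :
    ∃ θ : l2Space ι ≃ₜ l2Space ι, (∀ x ∈ K, θ x = h x) ∧
      (∀ p ∉ Metric.thickening ε (K \ D), θ p = p) ∧ ∀ p, dist (θ p) p < ε := by
  obtain ⟨J, hJ, μ, hμ, hμL⟩ := exists_homeomorph_coordProj_eq_zero
    (hK.union (hK.image_of_continuousOn hc)) (show 0 < ε / 40 by positivity)
  have hsymm : ∀ {x}, x ∈ μ '' K → μ.symm x ∈ K := by
    rintro _ ⟨x, hx, rfl⟩
    simpa using hx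
  obtain ⟨θ, hθK, hθs, hθ⟩ := exists_homeomorph_extending_of_coordProj_eq_zero hJ
    (K := μ '' K) (D := μ '' D) (h := fun x => μ (h (μ.symm x))) (ε := 3 * ε / 10)
    (hK.image μ.continuous) (μ.isClosedMap D hD)
    (μ.continuous.comp_continuousOn (hc.comp μ.symm.continuous.continuousOn fun _ => hsymm))
    (fun x hx y hy hxy => μ.symm.injective (hi (hsymm hx) (hsymm hy) (μ.injective hxy)))
    (by
      rw [← image_inter μ.injective]
      rintro _ ⟨x, hx, rfl⟩
      rw [μ.symm_apply_apply, hDid x hx])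
    (forall_mem_image.2 fun x hx => hμL x (Or.inl hx))
    (fun x hx => hμL _ (Or.inr (mem_image_of_mem h (hsymm hx)))) (by positivity)
    (by
      rintro _ ⟨x, hx, rfl⟩
      rw [μ.symm_apply_apply]
      linarith [dist_triangle4_right (μ (h x)) (μ x) (h x) x, hμ (h x), hμ x, hnear x hx])
  rw [← image_sdiff μ.injective] at hθs
  refine ⟨(μ.trans θ).trans μ.symm, fun x hx => ?_, fun p hp => ?_, fun p => ?_⟩
  · rw [Homeomorph.trans_apply, Homeomorph.trans_apply, hθK _ (mem_image_of_mem _ hx),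
      μ.symm_apply_apply, μ.symm_apply_apply]
  · exact conj_eq_self_of_notMem_thickening hμ hθs fun hp' =>
      hp (Metric.thickening_mono (by linarith) _ hp')
  · exact (dist_conj_le hμ hθ p).trans_lt (by linarith)

end Unknotting

/-! ### General position -/

section GeneralPosition

variable {E : Type*} [NormedAddCommGroup E] [NormedSpace ℝ E] [FiniteDimensional ℝ E]

theorem exists_dist_lt_forall_notMem_submodule (x : E) {ε : ℝ} (hε : 0 < ε)
    {𝒮 : Set (Submodule ℝ E)} (h𝒮 : 𝒮.Countable) (htop : ⊤ ∉ 𝒮) :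
    ∃ p, dist p x < ε ∧ ∀ S ∈ 𝒮, p ∉ S := by
  borelize E
  let ν : MeasureTheory.Measure E := MeasureTheory.Measure.addHaar
  have hnull : ν (⋃ S ∈ 𝒮, (S : Set E)) = 0 :=
    (MeasureTheory.measure_biUnion_null_iff h𝒮).2 fun S hS =>
      MeasureTheory.Measure.addHaar_submodule ν S fun h => htop (h ▸ hS)
  by_contra! hcover
  have hball : Metric.ball x ε ⊆ ⋃ S ∈ 𝒮, (S : Set E) := fun p hp => by simpa using hcover p hp
  exact (Metric.measure_ball_pos ν x hε).ne' (MeasureTheory.measure_mono_null hball hnull)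

theorem exists_linearIndepOn_near {I : Type*} (f : I → E) {ε : ℝ} (hε : 0 < ε) (T : Finset I) :
    ∃ v : I → E, (∀ i ∈ T, dist (v i) (f i) < ε) ∧
      ∀ S ⊆ T, S.card ≤ Module.finrank ℝ E → LinearIndepOn ℝ v (S : Set I) := by
  classical
  induction T using Finset.induction_on with
  | empty =>
    refine ⟨f, by simp, fun S hS _ => ?_⟩
    rw [Finset.subset_empty.1 hS, Finset.coe_empty]
    exact linearIndepOn_empty _ _
  | insert a T ha ih =>
    obtain ⟨v, hv, hvT⟩ := ih
    -- The new vector avoids the finitely many proper subspaces spanned by the previous ones.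
    obtain ⟨p, hpa, hpS⟩ := exists_dist_lt_forall_notMem_submodule (f a) hε
      ((T.powerset.filter fun S => S.card < Module.finrank ℝ E).finite_toSet.image
        fun S : Finset I => Submodule.span ℝ (v '' (S : Set I))).countable (by
        rintro ⟨S, hS, hStop⟩
        have hcard := finrank_span_finset_le_card (R := ℝ) (S.image v)
        rw [Finset.coe_image, Set.finrank, show Submodule.span ℝ _ = ⊤ from hStop,
          finrank_top] at hcard
        exact (hcard.trans Finset.card_image_le).not_gt (Finset.mem_filter.1 hS).2)
    have hupd : ∀ S : Finset I, a ∉ S → EqOn (Function.update v a p) v (S : Set I) :=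
      fun S haS i hi => Function.update_of_ne (by rintro rfl; exact haS hi) _ _
    refine ⟨Function.update v a p, Finset.forall_mem_insert .. |>.2 ⟨by simpa using hpa, ?_⟩,
      fun S hST hS => ?_⟩
    · exact fun i hi => hupd T ha hi ▸ hv i hi
    by_cases haS : a ∈ S
    · have hcard := Finset.card_erase_lt_of_mem haS
      have hT : S.erase a ⊆ T := Finset.subset_insert_iff.1 hST
      have hae : a ∉ S.erase a := Finset.notMem_erase a S
      rw [← Finset.insert_erase haS, Finset.coe_insert, linearIndepOn_insert (by simp),
        linearIndepOn_congr (hupd _ hae), Function.update_self, (hupd _ hae).image_eq]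
      exact ⟨hvT _ hT (by lia), hpS _ (mem_image_of_mem _ (by simpa [hT] using by lia))⟩
    · exact (linearIndepOn_congr (hupd S haS)).2
        (hvT S ((Finset.subset_insert_iff_of_notMem haS).1 hST) hS)

end GeneralPosition

theorem eq_of_sum_smul_eq_of_linearIndepOn {R I M : Type*} [Ring R] [AddCommGroup M] [Module R M]
    [Fintype I] {v : I → M} {S : Finset I} (hv : LinearIndepOn R v (S : Set I)) {a b : I → R}
    (ha : ∀ i ∉ S, a i = 0) (hb : ∀ i ∉ S, b i = 0) (h : ∑ i, a i • v i = ∑ i, b i • v i) :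
    a = b := by
  have hsum : ∑ i ∈ S, (a i - b i) • v i = 0 := by
    rw [Finset.sum_subset S.subset_univ fun i _ hi => by rw [ha i hi, hb i hi, sub_zero, zero_smul]]
    simpa only [sub_smul, Finset.sum_sub_distrib] using sub_eq_zero.2 h
  ext i
  by_cases hi : i ∈ S
  · exact sub_eq_zero.1 (linearIndepOn_finset_iff.1 hv _ hsum i hi)
  · rw [ha i hi, hb i hi]

/-! ### The Menger–Nöbeling embedding theorem -/

theorem IsOpenCover.exists_mem {X : Type*} [TopologicalSpace X] {𝒰 : Set (Set X)}
    (h𝒰 : IsOpenCover 𝒰) (x : X) : ∃ U ∈ 𝒰, x ∈ U := by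
  rw [← mem_sUnion, h𝒰.2]
  exact mem_univ x

theorem isOpenCover_range {X I : Type*} [TopologicalSpace X] {V : I → Set X}
    (hV : ∀ i, IsOpen (V i)) (hcov : ∀ x, ∃ i, x ∈ V i) : IsOpenCover (range V) :=
  ⟨forall_mem_range.2 hV, eq_univ_of_forall fun x => by simpa using hcov x⟩

section MengerNobeling

variable {K E : Type*} [MetricSpace K] [CompactSpace K] {n : ℕ}

theorem isOpen_setOf_eq_imp_dist_lt {W : Type*} [MetricSpace W] (ε : ℝ) :
    IsOpen {f : C(K, W) | ∀ x y, f x = f y → dist x y < ε} := by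
  have hclosed :
      IsClosed {q : C(K, W) × (K × K) | q.1 q.2.1 = q.1 q.2.2 ∧ ε ≤ dist q.2.1 q.2.2} :=
    (isClosed_eq (by fun_prop) (by fun_prop)).and (isClosed_le (by fun_prop) (by fun_prop))
  convert (isClosedMap_fst_of_compactSpace _ hclosed).isOpen_compl using 1
  ext f
  simp

theorem CovDimLE.exists_finset_cover_dist_lt (hn : CovDimLE K n) {r : ℝ} (hr : 0 < r) :
    ∃ t : Finset (Set K), (∀ V ∈ t, IsOpen V) ∧ (∀ x, ∃ V ∈ t, x ∈ V) ∧
      (∀ V ∈ t, ∀ x ∈ V, ∀ y ∈ V, dist x y < r) ∧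
      ∀ x, ({V ∈ t | x ∈ V} : Set (Set K)).encard ≤ n + 1 := by
  classical
  obtain ⟨𝒱, h𝒱, h𝒱r, h𝒱m⟩ := hn _ (isOpenCover_range (V := fun x : K => Metric.ball x (r / 2))
    (fun _ => Metric.isOpen_ball) fun x => ⟨x, Metric.mem_ball_self (half_pos hr)⟩)
  obtain ⟨t, ht⟩ := isCompact_univ.elim_finite_subcover (fun V : 𝒱 => (V : Set K))
    (fun V => h𝒱.1 _ V.2) (by rw [← sUnion_eq_iUnion, h𝒱.2])
  have ht𝒱 : ∀ V ∈ t.map (Function.Embedding.subtype _), V ∈ 𝒱 := by simp +contextual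
  refine ⟨t.map (Function.Embedding.subtype _), fun V hV => h𝒱.1 V (ht𝒱 V hV), fun x => ?_,
    fun V hV x hx y hy => ?_, fun x => ?_⟩
  · obtain ⟨V, hV, hxV⟩ := mem_iUnion₂.1 (ht (mem_univ x))
    exact ⟨V, Finset.mem_map_of_mem _ hV, hxV⟩
  · obtain ⟨_, ⟨z, rfl⟩, hz⟩ := h𝒱r V (ht𝒱 V hV)
    linarith [dist_triangle_right x y z, Metric.mem_ball.1 (hz hx), Metric.mem_ball.1 (hz hy)]
  · have hsub : {V | V ∈ t.map (Function.Embedding.subtype _) ∧ x ∈ V} ⊆ {V ∈ 𝒱 | x ∈ V} :=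
      fun V hV => ⟨ht𝒱 V hV.1, hV.2⟩
    exact (encard_le_encard hsub).trans (encard_le_coe_iff_finite_ncard_le.2 (h𝒱m x))

variable [NormedAddCommGroup E] [NormedSpace ℝ E] [FiniteDimensional ℝ E]

/-- A map `f` is replaced by the barycentric map `x ↦ ∑ V, lam V x • v V` of a fine cover of order
`n + 1` to vectors in general position. Two points with the same image have barycentric coordinates
supported on at most `2 * n + 2` linearly independent vectors, hence equal, so they lie in a common
member of the cover. -/
theorem CovDimLE.dense_setOf_eq_imp_dist_lt (hn : CovDimLE K n)
    (hE : 2 * n + 2 ≤ Module.finrank ℝ E) {ε : ℝ} (hε : 0 < ε) :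
    Dense {f : C(K, E) | ∀ x y, f x = f y → dist x y < ε} := by
  classical
  refine Metric.dense_iff.2 fun f δ hδ => ?_
  obtain ⟨η, hη, hfη⟩ := Metric.uniformContinuous_iff.1
    (CompactSpace.uniformContinuous_of_continuous f.continuous) (δ / 4) (by positivity)
  obtain ⟨t, hto, htc, htd, htm⟩ := hn.exists_finset_cover_dist_lt (lt_min hη hε)
  obtain ⟨lam, hlam⟩ := PartitionOfUnity.exists_isSubordinate isClosed_univ
    (fun V : t => (V : Set K)) (fun V => hto V V.2) fun x _ => by simpa using htc x
  have hmem : ∀ (V : t) x, lam V x ≠ 0 → x ∈ (V : Set K) := fun V x h =>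
    hlam V (subset_tsupport _ h)
  have hvalue : ∀ V : t, ∃ q, ∀ x ∈ (V : Set K), dist q (f x) < δ / 4 := fun V => by
    rcases (V : Set K).eq_empty_or_nonempty with hV | ⟨p, hp⟩
    · simp [hV]
    · exact ⟨f p, fun x hx => hfη ((htd V V.2 p hp x hx).trans_le (min_le_left _ _))⟩
  choose q hq using hvalue
  obtain ⟨v, hvq, hv⟩ := exists_linearIndepOn_near q (show 0 < δ / 4 by positivity) Finset.univ
  let g : C(K, E) := ⟨fun x => ∑ V, lam V x • v V, by fun_prop⟩
  have hgf : ∀ x, g x ∈ Metric.closedBall (f x) (δ / 2) := fun x => by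
    have := lam.finsum_smul_mem_convex (g := fun V _ => v V) (mem_univ x) (fun V hV => ?_)
      (convex_closedBall (f x) (δ / 2))
    · rwa [finsum_eq_sum_of_fintype] at this
    · rw [Metric.mem_closedBall]
      linarith [dist_triangle (v V) (q V) (f x), hvq V (Finset.mem_univ V), hq V x (hmem V x hV)]
  refine ⟨g, ?_, fun x y hxy => ?_⟩
  · exact ((ContinuousMap.dist_le (half_pos hδ).le).2 hgf).trans_lt (half_lt_self hδ)
  let S : K → Finset t := fun x => {V | lam V x ≠ 0}
  have hcard : ∀ x, (S x).card ≤ n + 1 := fun x => by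
    have hS : Subtype.val '' (S x : Set t) ⊆ {V ∈ (t : Set (Set K)) | x ∈ V} := by
      rintro _ ⟨V, hV, rfl⟩
      exact ⟨V.2, hmem V x (by simpa [S] using hV)⟩
    have := (encard_le_encard hS).trans (htm x)
    rw [Subtype.val_injective.encard_image, encard_coe_eq_coe_finsetCard] at this
    exact_mod_cast this
  have hcoord : (fun V => lam V x) = fun V => lam V y := by
    refine eq_of_sum_smul_eq_of_linearIndepOn (hv (S x ∪ S y) (Finset.subset_univ _) ?_)
      (fun V hV => by by_contra h; simp_all [S]) (fun V hV => by by_contra h; simp_all [S]) hxy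
    linarith [Finset.card_union_le (S x) (S y), hcard x, hcard y]
  obtain ⟨V, hV⟩ : ∃ V, 0 < lam V x := lam.exists_pos (mem_univ x)
  have hVy : lam V y ≠ 0 := fun h => hV.ne' ((congrFun hcoord V).trans h)
  exact (htd V V.2 x (hmem V x hV.ne') y (hmem V y hVy)).trans_le (min_le_right _ _)

/-- The optimal condition is `2 * n + 1 ≤ Module.finrank ℝ E`; it would require affine instead of
linear independence. -/
theorem CovDimLE.exists_injective (hn : CovDimLE K n) (hE : 2 * n + 2 ≤ Module.finrank ℝ E) :
    ∃ f : C(K, E), Function.Injective f := by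
  have hdense : Dense (⋂ k : ℕ, {f : C(K, E) | ∀ x y, f x = f y → dist x y < 1 / (k + 1)}) :=
    dense_iInter_of_isOpen_nat (fun k => isOpen_setOf_eq_imp_dist_lt _) fun k =>
      hn.dense_setOf_eq_imp_dist_lt hE (by positivity)
  obtain ⟨f, hf⟩ := hdense.nonempty
  refine ⟨f, fun x y hxy => ?_⟩
  by_contra hne
  obtain ⟨k, hk⟩ := exists_nat_one_div_lt (dist_pos.2 hne)
  exact lt_asymm hk (mem_iInter.1 hf k x y hxy)

end MengerNobeling

/-! ### Upper bounds for the covering dimension -/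

theorem exists_refinement_of_family {X I : Type*} [TopologicalSpace X] {𝒰 : Set (Set X)}
    {s : Set I} {V : I → Set X} {n : ℕ} (hV : ∀ i ∈ s, IsOpen (V i))
    (hcov : ∀ x, ∃ i ∈ s, x ∈ V i) (hVU : ∀ i ∈ s, (V i).Nonempty → ∃ U ∈ 𝒰, V i ⊆ U)
    (hmult : ∀ x, {i ∈ s | x ∈ V i}.encard ≤ n + 1) :
    ∃ 𝒱 : Set (Set X), IsOpenCover 𝒱 ∧ (∀ V ∈ 𝒱, ∃ U ∈ 𝒰, V ⊆ U) ∧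
      ∀ x : X, {V ∈ 𝒱 | x ∈ V}.Finite ∧ {V ∈ 𝒱 | x ∈ V}.ncard ≤ n + 1 := by
  refine ⟨{W ∈ V '' s | W.Nonempty}, ⟨?_, eq_univ_of_forall fun x => ?_⟩, ?_, fun x => ?_⟩
  · rintro _ ⟨⟨i, hi, rfl⟩, -⟩
    exact hV i hi
  · obtain ⟨i, hi, hx⟩ := hcov x
    exact ⟨V i, ⟨mem_image_of_mem V hi, x, hx⟩, hx⟩
  · rintro _ ⟨⟨i, hi, rfl⟩, hne⟩
    exact hVU i hi hne
  · have hsub : {W ∈ {W ∈ V '' s | W.Nonempty} | x ∈ W} ⊆ V '' {i ∈ s | x ∈ V i} := by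
      rintro _ ⟨⟨⟨i, hi, rfl⟩, -⟩, hx⟩
      exact mem_image_of_mem V ⟨hi, hx⟩
    refine encard_le_coe_iff_finite_ncard_le.1 ?_
    exact (encard_le_encard hsub).trans ((encard_image_le _ _).trans (mod_cast hmult x))

section Lattice

variable {I : Type*} [Fintype I] {r : ℝ}

theorem exists_mem_ball_lattice (hr : 0 < r) (y : I → ℝ) :
    ∃ z : I → ℤ, y ∈ Metric.ball (fun i => r * z i) r := by
  refine ⟨fun i => ⌊y i / r⌋, (dist_pi_lt_iff hr).2 fun i => ?_⟩
  rw [Real.dist_eq, show y i - r * ⌊y i / r⌋ = r * Int.fract (y i / r) by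
    rw [Int.fract, mul_sub, mul_div_cancel₀ _ hr.ne'], abs_mul, abs_of_pos hr, Int.abs_fract]
  exact mul_lt_of_lt_one_right hr (Int.fract_lt_one _)

theorem encard_setOf_mem_ball_lattice_le (hr : 0 < r) (y : I → ℝ) :
    {z : I → ℤ | y ∈ Metric.ball (fun i => r * (z i : ℝ)) r}.encard ≤ 2 ^ Fintype.card I := by
  classical
  let T : Finset (I → ℤ) := Fintype.piFinset fun i => Finset.Icc ⌊y i / r⌋ (⌊y i / r⌋ + 1)
  have hT : T.card = 2 ^ Fintype.card I := by
    have hIcc : ∀ m : ℤ, (Finset.Icc m (m + 1)).card = 2 := fun m => by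
      rw [Int.card_Icc]
      lia
    simp only [T, Fintype.card_piFinset, hIcc, Finset.prod_const, Finset.card_univ]
  have hsub : {z : I → ℤ | y ∈ Metric.ball (fun i => r * (z i : ℝ)) r} ⊆ T := fun z hz => by
    refine Fintype.mem_piFinset.2 fun i => Finset.mem_Icc.2 ?_
    have hzi : |y i - r * z i| < r := (dist_pi_lt_iff hr).1 hz i
    rw [abs_sub_lt_iff] at hzi
    have hlower : y i / r < z i + 1 := (div_lt_iff₀ hr).2 (by linarith)
    have hupper : (z i : ℝ) < y i / r + 1 := by
      rw [← sub_lt_iff_lt_add, lt_div_iff₀ hr]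
      linarith
    exact ⟨Int.lt_add_one_iff.1 (Int.floor_lt.2 (mod_cast hlower)), by
      rw [← Int.floor_add_one]
      exact Int.le_floor.2 hupper.le⟩
  refine (encard_le_encard hsub).trans_eq ?_
  rw [encard_coe_eq_coe_finsetCard, hT]
  norm_cast

end Lattice

/-- The bound is crude: preimages of the overlapping cubes of a fine grid are used. -/
theorem covDimLE_of_isInducing {K I : Type*} [TopologicalSpace K] [CompactSpace K] [Fintype I]
    {φ : K → I → ℝ} (hφ : IsInducing φ) : CovDimLE K (2 ^ Fintype.card I) := by
  intro 𝒰 h𝒰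
  choose O hO hOU using fun U : 𝒰 => hφ.isOpen_iff.1 (h𝒰.1 _ U.2)
  obtain ⟨δ, hδ, hLebesgue⟩ := lebesgue_number_lemma_of_metric (isCompact_range hφ.continuous) hO
    (range_subset_iff.2 fun x => by
      obtain ⟨U, hU, hxU⟩ := h𝒰.exists_mem x
      have hφx : x ∈ φ ⁻¹' O ⟨U, hU⟩ := by rwa [hOU]
      exact mem_iUnion_of_mem ⟨U, hU⟩ hφx)
  refine exists_refinement_of_family (s := univ)
    (V := fun z : I → ℤ => φ ⁻¹' Metric.ball (fun i => δ / 2 * z i) (δ / 2))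
    (fun z _ => Metric.isOpen_ball.preimage hφ.continuous)
    (fun x => by simpa using exists_mem_ball_lattice (half_pos hδ) (φ x)) ?_ fun x => ?_
  · rintro z - ⟨p, hp⟩
    obtain ⟨U, hU⟩ := hLebesgue _ (mem_range_self p)
    refine ⟨U, U.2, fun y hy => ?_⟩
    rw [← hOU]
    refine hU ?_
    rw [Metric.mem_ball]
    linarith [dist_triangle_right (φ y) (φ p) fun i => δ / 2 * z i, Metric.mem_ball.1 hp,
      Metric.mem_ball.1 hy]
  · refine (encard_le_encard fun z hz => hz.2).trans
      ((encard_setOf_mem_ball_lattice_le (half_pos hδ) (φ x)).trans ?_)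
    exact_mod_cast le_self_add

theorem CovDimLE.of_isClosedEmbedding {A X : Type*} [TopologicalSpace A] [TopologicalSpace X]
    {f : A → X} (hf : IsClosedEmbedding f) {n : ℕ} (h : CovDimLE X n) : CovDimLE A n := by
  intro 𝒰 h𝒰
  obtain ⟨𝒱, h𝒱, h𝒱r, h𝒱m⟩ := h ({O | IsOpen O ∧ ∃ U ∈ 𝒰, f ⁻¹' O ⊆ U} ∪ {(range f)ᶜ}) ⟨by
    rintro O (hO | rfl)
    exacts [hO.1, hf.isClosed_range.isOpen_compl], eq_univ_of_forall fun x => by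
    by_cases hx : x ∈ range f
    · obtain ⟨a, rfl⟩ := hx
      obtain ⟨U, hU, haU⟩ := h𝒰.exists_mem a
      obtain ⟨O, hO, rfl⟩ := hf.isInducing.isOpen_iff.1 (h𝒰.1 U hU)
      exact ⟨O, Or.inl ⟨hO, _, hU, Subset.rfl⟩, haU⟩
    · exact ⟨_, Or.inr rfl, hx⟩⟩
  refine exists_refinement_of_family (s := 𝒱) (V := (f ⁻¹' ·))
    (fun V hV => (h𝒱.1 V hV).preimage hf.continuous) (fun a => h𝒱.exists_mem (f a))
    (fun V hV hne => ?_) fun a => encard_le_coe_iff_finite_ncard_le.2 (h𝒱m (f a))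
  obtain ⟨a, ha⟩ := hne
  obtain ⟨O, ⟨-, U, hU, hOU⟩ | rfl, hVO⟩ := h𝒱r V hV
  · exact ⟨U, hU, (preimage_mono hVO).trans hOU⟩
  · exact absurd (mem_range_self a) (hVO ha)

theorem IsOpenCover.comap {A X : Type*} [TopologicalSpace A] [TopologicalSpace X] {f : A → X}
    (hf : Continuous f) {𝒱 : Set (Set X)} (h : IsOpenCover 𝒱) : IsOpenCover ((f ⁻¹' ·) '' 𝒱) :=
  ⟨forall_mem_image.2 fun V hV => (h.1 V hV).preimage hf,
    by rw [sUnion_image, ← preimage_iUnion₂, ← sUnion_eq_biUnion, h.2, preimage_univ]⟩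

theorem CovDimLE.of_clopen_partition {X A : Type*} [TopologicalSpace X] {P : A → Set X}
    (hP : ∀ a, IsOpen (P a)) (hd : ∀ a b x, x ∈ P a → x ∈ P b → a = b) (hc : ∀ x, ∃ a, x ∈ P a)
    {n : ℕ} (h : ∀ a, CovDimLE ↥(P a) n) : CovDimLE X n := by
  intro 𝒰 h𝒰
  choose 𝒱 h𝒱 h𝒱r h𝒱m using fun a => h a _ (h𝒰.comap continuous_subtype_val)
  refine exists_refinement_of_family (I := Σ a, Set (P a)) (s := {i | i.2 ∈ 𝒱 i.1})
    (V := fun i => Subtype.val '' i.2)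
    (fun i hi => (hP i.1).isOpenMap_subtype_val _ ((h𝒱 i.1).1 _ hi)) (fun x => ?_)
    (fun i hi _ => ?_) fun x => ?_
  · obtain ⟨a, ha⟩ := hc x
    obtain ⟨V, hV, hx⟩ := (h𝒱 a).exists_mem ⟨x, ha⟩
    exact ⟨⟨a, V⟩, hV, ⟨x, ha⟩, hx, rfl⟩
  · obtain ⟨_, ⟨U, hU, rfl⟩, hVU⟩ := h𝒱r i.1 i.2 hi
    exact ⟨U, hU, image_subset_iff.2 hVU⟩
  · obtain ⟨a, ha⟩ := hc x
    have hsub : {i : Σ a, Set (P a) | i.2 ∈ 𝒱 i.1 ∧ x ∈ Subtype.val '' i.2} ⊆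
        Sigma.mk a '' {V ∈ 𝒱 a | ⟨x, ha⟩ ∈ V} := by
      rintro ⟨b, V⟩ ⟨hV, ⟨x, hb⟩, hx, rfl⟩
      obtain rfl := hd _ _ _ ha hb
      exact mem_image_of_mem _ ⟨hV, hx⟩
    exact (encard_le_encard hsub).trans ((encard_image_le _ _).trans
      (encard_le_coe_iff_finite_ncard_le.2 (h𝒱m a ⟨x, ha⟩)))

/-! ### Finite-dimensional compact sets -/

theorem TopFinDim.of_isClosedEmbedding {A X : Type*} [TopologicalSpace A] [TopologicalSpace X]
    {f : A → X} (hf : IsClosedEmbedding f) (h : TopFinDim X) : TopFinDim A :=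
  h.imp fun _ => CovDimLE.of_isClosedEmbedding hf

theorem covDimLE_of_injOn {V J : Type*} [TopologicalSpace V] [Fintype J] {K : Set V}
    (hK : IsCompact K) {φ : V → J → ℝ} (hc : ContinuousOn φ K) (hi : InjOn φ K) :
    CovDimLE ↥K (2 ^ Fintype.card J) := by
  have := isCompact_iff_compactSpace.1 hK
  exact covDimLE_of_isInducing (hc.domRestrict.isClosedEmbedding hi.injective).isInducing

/-- A set in a topological space is a finite-dimensional compactum: it is compact and, as a
subspace, has finite covering dimension. -/
def IsFinDimCompact {V : Type*} [TopologicalSpace V] (K : Set V) : Prop :=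
  IsCompact K ∧ TopFinDim ↥K

namespace IsFinDimCompact

theorem image {V W : Type*} [TopologicalSpace V] [TopologicalSpace W] [T2Space W] {K : Set V}
    (hK : IsFinDimCompact K) {h : V → W} (hc : ContinuousOn h K) (hi : InjOn h K) :
    IsFinDimCompact (h '' K) := by
  have := isCompact_iff_compactSpace.1 hK.1
  have he := (hc.domRestrict.isClosedEmbedding hi.injective).isEmbedding
  refine ⟨hK.1.image_of_continuousOn hc, ?_⟩
  rw [← range_domRestrict]
  exact hK.2.of_isClosedEmbedding he.toHomeomorph.symm.isClosedEmbedding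

variable {V : Type*} [MetricSpace V] {K L : Set V}

theorem of_injOn {J : Type*} [Finite J] (hK : IsCompact K) {φ : V → J → ℝ}
    (hc : ContinuousOn φ K) (hi : InjOn φ K) : IsFinDimCompact K := by
  have := Fintype.ofFinite J
  exact ⟨hK, _, covDimLE_of_injOn hK hc hi⟩

theorem exists_injOn (hK : IsFinDimCompact K) : ∃ (m : ℕ) (φ : C(V, Fin m → ℝ)), InjOn φ K := by
  have := isCompact_iff_compactSpace.1 hK.1
  obtain ⟨n, hn⟩ := hK.2
  obtain ⟨f, hf⟩ := hn.exists_injective (E := Fin (2 * n + 2) → ℝ) (by simp)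
  obtain ⟨φ, rfl⟩ := f.exists_restrict_eq hK.1.isClosed
  exact ⟨_, φ, injOn_iff_injective.2 hf⟩

theorem mono (hK : IsFinDimCompact K) (hL : IsCompact L) (hLK : L ⊆ K) : IsFinDimCompact L := by
  obtain ⟨m, φ, hφ⟩ := hK.exists_injOn
  exact of_injOn hL φ.continuous.continuousOn (hφ.mono hLK)

theorem empty : IsFinDimCompact (∅ : Set V) :=
  of_injOn (φ := fun _ => Empty.elim) isCompact_empty (continuousOn_empty _) (injOn_empty _)

/-- The embeddings of `K` and `L` are juxtaposed with functions whose zero sets are `K` and `L`,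
so that a point of `K` is never identified with a point outside `K`. -/
theorem union (hK : IsFinDimCompact K) (hL : IsFinDimCompact L) : IsFinDimCompact (K ∪ L) := by
  obtain ⟨m, φ, hφ⟩ := hK.exists_injOn
  obtain ⟨n, ψ, hψ⟩ := hL.exists_injOn
  obtain ⟨ρ, hρ, -⟩ := perfectlyNormalSpace_iff_forall_isClosed_preimage_zero.1 inferInstance K
    hK.1.isClosed
  obtain ⟨σ, hσ, -⟩ := perfectlyNormalSpace_iff_forall_isClosed_preimage_zero.1 inferInstance L
    hL.1.isClosed
  refine of_injOn (J := (Fin m ⊕ Fin n) ⊕ Fin 2) (hK.1.union hL.1)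
    (φ := fun x => Sum.elim (Sum.elim (φ x) (ψ x)) ![ρ x, σ x])
    (Continuous.continuousOn (continuous_pi ?_)) fun x hx y _ hxy => ?_
  · rintro ((i | i) | i)
    · exact (continuous_apply i).comp φ.continuous
    · exact (continuous_apply i).comp ψ.continuous
    · fin_cases i
      exacts [ρ.continuous, σ.continuous]
  · have hρxy : ρ x = ρ y := congrFun hxy (Sum.inr 0)
    have hσxy : σ x = σ y := congrFun hxy (Sum.inr 1)
    have hKxy : x ∈ K ↔ y ∈ K := by simp [hρ, hρxy]
    have hLxy : x ∈ L ↔ y ∈ L := by simp [hσ, hσxy]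
    rcases hx with hx | hx
    · exact hφ hx (hKxy.1 hx) (funext fun i => congrFun hxy (Sum.inl (Sum.inl i)))
    · exact hψ hx (hLxy.1 hx) (funext fun i => congrFun hxy (Sum.inl (Sum.inr i)))

end IsFinDimCompact

/-! ### Countable unions of finite-dimensional locally compact spaces -/

/-- A set is a countable union of subspaces that are locally compact and have finite covering
dimension. -/
def IsSigmaFinDimLocallyCompact {X : Type*} [TopologicalSpace X] (Y : Set X) : Prop :=
  ∃ F : ℕ → Set X, Y = ⋃ n, F n ∧ ∀ n, TopFinDim ↥(F n) ∧ LocallyCompactSpace ↥(F n)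

theorem IsSigmaFinDimLocallyCompact.image {X Z : Type*} [TopologicalSpace X] [TopologicalSpace Z]
    {Y : Set X} (hY : IsSigmaFinDimLocallyCompact Y) (e : X ≃ₜ Z) :
    IsSigmaFinDimLocallyCompact (e '' Y) := by
  obtain ⟨F, rfl, hF⟩ := hY
  refine ⟨fun n => e '' F n, image_iUnion, fun n => ?_⟩
  have hemb := (e.image (F n)).symm.isClosedEmbedding
  have := (hF n).2
  exact ⟨(hF n).1.of_isClosedEmbedding hemb, hemb.locallyCompactSpace⟩

theorem continuous_l2_apply {ι : Type*} (i : ι) :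
    Continuous fun x : l2Space ι => (x : ι → ℝ) i :=
  (lp.evalCLM ℝ (fun _ : ι => ℝ) 2 i).continuous

section Decomposition

variable {ι : Type*}

/-- The vectors supported exactly on `s` with all nonzero coordinates of modulus between
`1 / (k + 1)` and `k + 1`. -/
def l2Box (s : Finset ι) (k : ℕ) : Set (l2Space ι) :=
  {x | (∀ i ∈ s, |(x : ι → ℝ) i| ∈ Icc (1 / ((k : ℝ) + 1)) (k + 1)) ∧ ∀ i ∉ s, (x : ι → ℝ) i = 0}

/-- The union of the boxes `l2Box s k` over all `s` with `n` elements. The support of a vector is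
locally constant on it, so that it is a topological sum of compact sets of dimension `n`. -/
def l2Layer (ι : Type*) (n k : ℕ) : Set (l2Space ι) :=
  ⋃ s : {s : Finset ι // s.card = n}, l2Box s.1 k

variable {s : Finset ι} {k n : ℕ} {x y : l2Space ι}

theorem ne_zero_iff_of_mem_l2Box (hx : x ∈ l2Box s k) {i : ι} : (x : ι → ℝ) i ≠ 0 ↔ i ∈ s := by
  refine ⟨fun h => by_contra fun hi => h (hx.2 i hi), fun hi => abs_pos.1 ?_⟩
  exact (by positivity : (0 : ℝ) < 1 / (k + 1)).trans_le (hx.1 i hi).1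

theorem injOn_l2Box : InjOn (fun (x : l2Space ι) (i : s) => (x : ι → ℝ) i) (l2Box s k) := by
  refine fun x hx y hy hxy => lp.ext (funext fun i => ?_)
  by_cases hi : i ∈ s
  · exact congrFun hxy ⟨i, hi⟩
  · rw [hx.2 i hi, hy.2 i hi]

theorem isClosed_l2Box (s : Finset ι) (k : ℕ) : IsClosed (l2Box s k) := by
  simp only [l2Box, ofPred_and, ofPred_forall]
  exact (isClosed_biInter fun i _ => isClosed_Icc.preimage (continuous_l2_apply i).abs).inter
    (isClosed_biInter fun i _ => isClosed_eq (continuous_l2_apply i) continuous_const)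

theorem isCompact_l2Box (s : Finset ι) (k : ℕ) : IsCompact (l2Box s k) := by
  classical
  let Λ : (s → ℝ) → l2Space ι := fun c => ∑ i : s, c i • lp.single 2 (i : ι) (1 : ℝ)
  have hball := (isCompact_closedBall (0 : s → ℝ) (k + 1)).image (f := Λ) (by fun_prop)
  refine hball.of_isClosed_subset (isClosed_l2Box s k) fun x hx => ⟨fun i => (x : ι → ℝ) i, ?_, ?_⟩
  · rw [mem_closedBall_zero_iff, pi_norm_le_iff_of_nonneg (by positivity)]
    exact fun i => (hx.1 i i.2).2
  · ext j
    have hsum := Finset.sum_coe_sort s fun i => (x : ι → ℝ) i • lp.single 2 i (1 : ℝ)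
    simp only [Λ, hsum, lp.coeFn_sum, Finset.sum_apply]
    by_cases hj : j ∈ s
    · simp [lp.single_apply, Pi.single_apply, hj]
    · simp [lp.single_apply, Pi.single_apply, hj, hx.2 j hj]

theorem exists_mem_l2Box (hx : x ∈ l2fin ι) : ∃ s k, x ∈ l2Box s k := by
  have hx : {i | (x : ι → ℝ) i ≠ 0}.Finite := hx
  have hlower : ∀ i ∈ hx.toFinset, ∃ k : ℕ, 1 / ((k : ℝ) + 1) < |(x : ι → ℝ) i| := fun i hi =>
    exists_nat_one_div_lt (abs_pos.2 (by simpa using hi))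
  choose! κ hκ using hlower
  obtain ⟨k, hk⟩ := exists_nat_ge ‖x‖
  refine ⟨hx.toFinset, max k (hx.toFinset.sup κ), fun i hi => ⟨?_, ?_⟩, by simp⟩
  · have hi_le : κ i ≤ max k (hx.toFinset.sup κ) := (Finset.le_sup hi).trans (le_max_right _ _)
    exact (Nat.one_div_le_one_div hi_le).trans (hκ i hi).le
  · have hk_le : (k : ℝ) ≤ (max k (hx.toFinset.sup κ) : ℕ) := mod_cast le_max_left _ _
    linarith [l2_abs_apply_le x i]

theorem preimage_l2Box_eq_iInter (s : {s : Finset ι // s.card = n}) :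
    (Subtype.val ⁻¹' l2Box s.1 k : Set ↥(l2Layer ι n k)) =
      ⋂ i ∈ s.1, {x : l2Layer ι n k | ((x : l2Space ι) : ι → ℝ) i ≠ 0} := by
  ext ⟨x, hx⟩
  obtain ⟨t, ht⟩ := mem_iUnion.1 hx
  simp only [mem_preimage, mem_iInter, mem_ofPred_eq, ne_zero_iff_of_mem_l2Box ht]
  refine ⟨fun hxs i hi => ?_, fun hst => ?_⟩
  · rwa [← ne_zero_iff_of_mem_l2Box ht, ne_zero_iff_of_mem_l2Box hxs]
  · rwa [Finset.eq_of_subset_of_card_le hst (t.2.trans s.2.symm).le]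

theorem isOpen_preimage_l2Box (s : {s : Finset ι // s.card = n}) :
    IsOpen (Subtype.val ⁻¹' l2Box s.1 k : Set ↥(l2Layer ι n k)) := by
  rw [preimage_l2Box_eq_iInter]
  exact isOpen_biInter_finset fun i _ =>
    isOpen_ne_fun ((continuous_l2_apply i).comp continuous_subtype_val) continuous_const

theorem isCompact_preimage_l2Box (s : {s : Finset ι // s.card = n}) :
    IsCompact (Subtype.val ⁻¹' l2Box s.1 k : Set ↥(l2Layer ι n k)) :=
  IsInducing.subtypeVal.isCompact_preimage' (isCompact_l2Box s.1 k) (by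
    rw [Subtype.range_coe]
    exact subset_iUnion (fun s : {s : Finset ι // s.card = n} => l2Box s.1 k) s)

theorem topFinDim_l2Layer (ι : Type*) (n k : ℕ) : TopFinDim ↥(l2Layer ι n k) := by
  refine ⟨2 ^ n, CovDimLE.of_clopen_partition isOpen_preimage_l2Box (fun s t x hs ht => ?_)
    (fun x => ?_) fun s => ?_⟩
  · ext i
    rw [← ne_zero_iff_of_mem_l2Box hs, ne_zero_iff_of_mem_l2Box ht]
  · obtain ⟨s, hs⟩ := mem_iUnion.1 x.2
    exact ⟨s, hs⟩
  · have hdim := covDimLE_of_injOn (isCompact_preimage_l2Box (k := k) s)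
      (φ := fun (x : l2Layer ι n k) (i : s.1) => ((x : l2Space ι) : ι → ℝ) i)
      (continuous_pi fun i : s.1 =>
        (continuous_l2_apply i.1).comp continuous_subtype_val).continuousOn
      fun x hx y hy hxy => Subtype.ext (injOn_l2Box hx hy hxy)
    rwa [Fintype.card_coe, s.2] at hdim

theorem locallyCompactSpace_l2Layer (ι : Type*) (n k : ℕ) :
    LocallyCompactSpace ↥(l2Layer ι n k) := by
  have : WeaklyLocallyCompactSpace ↥(l2Layer ι n k) := ⟨fun x => by
    obtain ⟨s, hs⟩ := mem_iUnion.1 x.2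
    exact ⟨_, isCompact_preimage_l2Box s, (isOpen_preimage_l2Box s).mem_nhds hs⟩⟩
  infer_instance

theorem isSigmaFinDimLocallyCompact_l2fin (ι : Type*) :
    IsSigmaFinDimLocallyCompact (l2fin ι) := by
  refine ⟨fun N => l2Layer ι N.unpair.1 N.unpair.2, Subset.antisymm (fun x hx => ?_) ?_,
    fun N => ⟨topFinDim_l2Layer .., locallyCompactSpace_l2Layer ..⟩⟩
  · obtain ⟨s, k, hs⟩ := exists_mem_l2Box hx
    refine mem_iUnion_of_mem (Nat.pair s.card k) ?_
    rw [Nat.unpair_pair]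
    exact mem_iUnion_of_mem ⟨s, rfl⟩ hs
  · refine iUnion_subset fun N => iUnion_subset fun s x hx => s.1.finite_toSet.subset fun i hi => ?_
    exact (ne_zero_iff_of_mem_l2Box hx).1 hi

end Decomposition

/-! ### `ℓ₂ᶠ` absorbs finite-dimensional compacta -/

/-- Absorption of finite-dimensional compacta in metric terms: nearness to the identity is measured
by a constant `ε`, and the embedding of `K` is a total function of which only the restriction to `K`
matters. -/
def AbsorbsFinDimCompacta {V : Type*} [PseudoMetricSpace V] (Y : Set V) : Prop :=
  ∀ K : Set V, IsFinDimCompact K → ∀ B ⊆ K, IsCompact B → B ⊆ Y → ∀ ε > 0,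
    ∃ h : V → V, ContinuousOn h K ∧ InjOn h K ∧ MapsTo h K Y ∧ (∀ x ∈ B, h x = x) ∧
      ∀ x ∈ K, dist (h x) x ≤ ε

section Truncation

theorem exists_cutoff (n : ℕ) : ∃ a : C(ℝ, ℝ), a 0 = 1 ∧ (∀ r : ℝ, 1 ≤ n * r → a r = 0) ∧
    ∀ r, a r ∈ Icc 0 1 := by
  obtain ⟨a, ha0, ha1, ha⟩ := exists_continuous_zero_one_of_isClosed
    (isClosed_le continuous_const (by fun_prop) : IsClosed {r : ℝ | 1 ≤ n * r})
    (isClosed_singleton (x := (0 : ℝ))) (by norm_num)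
  exact ⟨a, ha1 rfl, fun r hr => ha0 hr, ha⟩

variable {ι : Type*} {K : Set (l2Space ι)}

theorem exists_monotone_seq_norm_coordProj_compl_le (hK : IsCompact K) {δ : ℕ → ℝ}
    (hδ : ∀ n, 0 < δ n) :
    ∃ S : ℕ → Finset ι, Monotone S ∧ ∀ n, ∀ x ∈ K, ‖coordProj (S n : Set ι)ᶜ x‖ ≤ δ n := by
  classical
  choose S hS using fun n => exists_finset_forall_norm_coordProj_compl_lt hK (hδ n)
  refine ⟨fun n => (Finset.range (n + 1)).biUnion S, fun a b hab =>
    Finset.biUnion_subset_biUnion_of_subset_left _ (Finset.range_mono (by lia)),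
    fun n x hx => (norm_coordProj_mono ?_ x).trans (hS n x hx).le⟩
  exact compl_subset_compl.2 (Finset.coe_subset.2
    (Finset.subset_biUnion_of_mem S (Finset.mem_range.2 n.lt_succ_self)))

theorem coordProj_coordProj_of_subset {s t : Set ι} (hst : s ⊆ t) (x : l2Space ι) :
    coordProj t (coordProj s x) = coordProj s x := by
  rw [coordProj_coordProj, inter_eq_right.2 hst]

theorem norm_coordProj_sub_coordProj_le {s t : Set ι} (hst : s ⊆ t) (x : l2Space ι) :
    ‖coordProj t x - coordProj s x‖ ≤ ‖coordProj sᶜ x‖ := by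
  rw [← coordProj_coordProj_of_subset hst, ← map_sub, ← coordProj_compl]
  exact norm_coordProj_le _ _

theorem tsum_coordProj_succ_sub_coordProj {S : ℕ → Set ι} {x : l2Space ι}
    (hS : Filter.Tendsto (fun n => ‖coordProj (S n)ᶜ x‖) Filter.atTop (𝓝 0))
    (hsum : Summable fun n => coordProj (S (n + 1)) x - coordProj (S n) x) :
    ∑' n, (coordProj (S (n + 1)) x - coordProj (S n) x) = x - coordProj (S 0) x := by
  have hx : Filter.Tendsto (fun n => coordProj (S n) x) Filter.atTop (𝓝 x) := by
    rw [tendsto_iff_norm_sub_tendsto_zero]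
    simpa only [norm_sub_rev, coordProj_compl] using hS
  have htel := hsum.hasSum.tendsto_sum_nat
  simp only [Finset.sum_range_sub fun n => coordProj (S n) x] at htel
  exact tendsto_nhds_unique htel (hx.sub_const _)

/-- The coordinates between the finite sets `S n` and `S (n + 1)` are switched off by a cutoff
function as soon as `1 ≤ n * ρ x`, whereas for `ρ x = 0` the series telescopes to `x`. -/
theorem exists_truncation (hK : IsCompact K) {ρ : l2Space ι → ℝ} (hρ : Continuous ρ)
    {ε : ℝ} (hε : 0 < ε) :
    ∃ (S : ℕ → Finset ι) (p : l2Space ι → l2Space ι), ContinuousOn p K ∧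
      (∀ x ∈ K, ρ x = 0 → p x = x) ∧
      (∀ x ∈ K, ∀ n : ℕ, 0 ≤ ρ x → 1 ≤ n * ρ x → ∀ i ∉ S n, (p x : ι → ℝ) i = 0) ∧
      ∀ x ∈ K, dist (p x) x ≤ ε := by
  let δ : ℕ → ℝ := fun n => ε / 2 / 2 / 2 ^ n
  have hδ : HasSum δ (ε / 2) := hasSum_geometric_two' _
  obtain ⟨S, hSmono, hS⟩ :=
    exists_monotone_seq_norm_coordProj_compl_le hK (δ := δ) fun n => by positivity
  choose a ha0 ha_zero ha using exists_cutoff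
  let P : ℕ → l2Space ι →L[ℝ] l2Space ι := fun n => coordProj (S n : Set ι)
  let D : ℕ → l2Space ι → l2Space ι := fun n x => a n (ρ x) • (P (n + 1) x - P n x)
  have hP : ∀ {m n}, m ≤ n → ∀ x, P n (P m x) = P m x := fun hmn x =>
    coordProj_coordProj_of_subset (Finset.coe_subset.2 (hSmono hmn)) x
  have hD : ∀ n, ∀ x ∈ K, ‖D n x‖ ≤ δ n := fun n x hx => by
    rw [norm_smul, Real.norm_of_nonneg (ha n _).1]
    exact (mul_le_of_le_one_left (norm_nonneg _) (ha n _).2).trans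
      ((norm_coordProj_sub_coordProj_le (Finset.coe_subset.2 (hSmono n.le_succ)) x).trans
        (hS n x hx))
  have hsum : ∀ x ∈ K, Summable fun n => D n x := fun x hx =>
    .of_norm_bounded hδ.summable fun n => hD n x hx
  refine ⟨S, fun x => P 0 x + ∑' n, D n x, ?_, fun x hx hρx => ?_, fun x hx n hρ0 hn i hi => ?_,
    fun x hx => ?_⟩
  · exact .add (by fun_prop) (continuousOn_tsum (fun n => by fun_prop) hδ.summable hD)
  · have hsum0 := hsum x hx
    simp only [D, hρx, ha0, one_smul] at hsum0 ⊢
    rw [tsum_coordProj_succ_sub_coordProj (squeeze_zero (fun _ => norm_nonneg _)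
      (fun n => hS n x hx) hδ.summable.tendsto_atTop_zero) hsum0, add_sub_cancel]
  · have hPn : P n (P 0 x + ∑' n, D n x) = P 0 x + ∑' n, D n x := by
      rw [map_add, hP n.zero_le, (P n).map_tsum (hsum x hx)]
      congr 2
      funext j
      rcases lt_or_ge j n with hj | hj
      · simp only [D, map_smul, map_sub, hP hj, hP hj.le]
      · have hj1 : 1 ≤ j * ρ x := hn.trans (by gcongr)
        simp only [D, ha_zero j _ hj1, zero_smul, map_zero]
    beta_reduce
    rw [← hPn]
    exact coordProj_apply_notMem _ hi
  · have htsum : ‖∑' n, D n x‖ ≤ ε / 2 := tsum_of_norm_bounded hδ fun n => hD n x hx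
    have hP0 : ‖x - P 0 x‖ ≤ ε / 2 := by
      rw [← coordProj_compl]
      exact (hS 0 x hx).trans (by simp only [δ]; norm_num; linarith)
    rw [dist_eq_norm, show P 0 x + ∑' n, D n x - x = ∑' n, D n x - (x - P 0 x) by abel]
    linarith [norm_sub_le (∑' n, D n x) (x - P 0 x)]

end Truncation

section Tagging

theorem exists_window (n : ℕ) : ∃ b : C(ℝ, ℝ), b 0 = 0 ∧
    (∀ r : ℝ, (n + 1) * r ≤ 1 → 1 ≤ (n + 2) * r → b r = 1) ∧
    (∀ r : ℝ, 1 ≤ n * r → b r = 0) ∧ ∀ r, b r ∈ Icc 0 1 := by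
  obtain ⟨b, hb0, hb1, hb⟩ := exists_continuous_zero_one_of_isClosed
    (s := Iic (0 : ℝ) ∪ {r | 1 ≤ n * r}) (t := {r | (n + 1) * r ≤ 1} ∩ {r | 1 ≤ (n + 2) * r})
    (.union isClosed_Iic (isClosed_le continuous_const (by fun_prop)))
    (.inter (isClosed_le (by fun_prop) continuous_const)
      (isClosed_le continuous_const (by fun_prop)))
    (disjoint_left.2 fun r hr ⟨(hr1 : (n + 1) * r ≤ 1), (hr2 : 1 ≤ (n + 2) * r)⟩ => by
      have hr0 : 0 < r := pos_of_mul_pos_right (one_pos.trans_le hr2) (by positivity)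
      rcases hr with (hr : r ≤ 0) | (hr : 1 ≤ n * r) <;> linarith)
  exact ⟨b, hb0 (Or.inl self_mem_Iic), fun r hr hr' => hb1 ⟨hr, hr'⟩, fun r hr => hb0 (Or.inr hr),
    hb⟩

theorem exists_nat_window {r : ℝ} (hr0 : 0 < r) (hr1 : r ≤ 1) :
    ∃ n : ℕ, (n + 1) * r ≤ 1 ∧ 1 ≤ ((n : ℝ) + 2) * r := by
  obtain ⟨n, hn⟩ := Nat.exists_eq_add_of_le (Nat.one_le_floor_iff _ |>.2 (one_le_one_div hr0 hr1))
  have hle := Nat.floor_le (one_div_pos.2 hr0).le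
  have hlt := Nat.lt_floor_add_one (1 / r)
  rw [hn, le_div_iff₀ hr0] at hle
  rw [hn, div_lt_iff₀ hr0] at hlt
  push_cast at hle hlt
  exact ⟨n, by linarith, by linarith⟩

theorem IsFinDimCompact.exists_seq_injOn {V : Type*} [MetricSpace V] {K : Set V}
    (hK : IsFinDimCompact K) :
    ∃ (m : ℕ) (f : ℕ → C(V, ℝ)), (∀ i x, f i x ∈ Icc 0 1) ∧ (∀ x, f 0 x = 1) ∧
      (∀ i > m, ∀ x, f i x = 0) ∧ InjOn (fun x i => f i x) K := by
  obtain ⟨m, φ, hφ⟩ := hK.exists_injOn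
  let f : ℕ → C(V, ℝ)
    | 0 => 1
    | i + 1 => if hi : i < m then ⟨fun x => Real.sigmoid (φ x ⟨i, hi⟩), by fun_prop⟩ else 0
  refine ⟨m, f, ?_, fun _ => rfl, ?_, fun x hx y hy hxy => hφ hx hy (funext fun i => ?_)⟩
  · rintro (_ | i) x
    · simp [f]
    · by_cases hi : i < m <;> simp [f, hi, Real.sigmoid_nonneg, Real.sigmoid_le_one]
  · rintro (_ | i) hi x
    · lia
    · simp [f, show ¬ i < m by lia]
  · have hxy := congrFun hxy (i + 1)
    simpa [f] using hxy

variable {ι : Type*} [Infinite ι] {K : Set (l2Space ι)}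

theorem exists_l2Space_map_of_paired_coords {V : Type*} [TopologicalSpace V] (hK : IsCompact K)
    (S : ℕ → Finset ι) {g : ℕ → ℕ → V → ℝ} (hg : ∀ n i, Continuous (g n i))
    (hg01 : ∀ n i y, g n i y ∈ Icc 0 1) {ε : ℝ} (hε : 0 < ε) :
    ∃ (Φ : V → l2Space ι) (w : ℕ → ℕ → ι) (δ : ℕ → ℕ → ℝ), Continuous Φ ∧ (∀ y, ‖Φ y‖ ≤ ε) ∧
      (∀ n i y, (Φ y : ι → ℝ) (w n i) = δ n i * g n i y) ∧
      (∀ y j, (Φ y : ι → ℝ) j ≠ 0 → ∃ n i, w n i = j) ∧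
      (∀ n i, 0 < δ n i) ∧ (∀ n i, w n i ∉ S n) ∧
      ∀ n i, ∀ x ∈ K, |(x : ι → ℝ) (w n i)| < δ n i := by
  classical
  let δ : ℕ → ℝ := fun k => ε / 2 / 2 ^ k
  have hδ0 : ∀ k, 0 < δ k := fun k => by positivity
  have hδ : HasSum δ ε := hasSum_geometric_two' _
  choose N hN using fun k => exists_finset_forall_norm_coordProj_compl_lt hK (hδ0 k)
  obtain ⟨w, hw, hwSN⟩ := exists_injective_forall_notMem fun k => S k.unpair.1 ∪ N k
  simp only [Finset.mem_union, not_or] at hwSN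
  let u : ℕ → V → ℝ := fun k y => g k.unpair.1 k.unpair.2 y
  obtain ⟨Φ, hΦc, hΦn, hΦw, hΦ0⟩ := exists_l2Space_map_of_coords hw hδ.summable
    (u := fun k y => δ k * u k y) (fun k => (hg _ _).const_mul _) fun k y => by
      rw [abs_of_nonneg (mul_nonneg (hδ0 k).le (hg01 _ _ y).1)]
      exact mul_le_of_le_one_right (hδ0 k).le (hg01 _ _ y).2
  refine ⟨Φ, fun n i => w (Nat.pair n i), fun n i => δ (Nat.pair n i), hΦc,
    fun y => hδ.tsum_eq ▸ hΦn y, fun n i y => by simp [hΦw, u], fun y j hj => ?_,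
    fun n i => hδ0 _, fun n i => by simpa using (hwSN (Nat.pair n i)).1, fun n i x hx => ?_⟩
  · obtain ⟨k, rfl⟩ : j ∈ range w := not_not.1 fun h => hj (hΦ0 y j h)
    exact ⟨k.unpair.1, k.unpair.2, by simp only [Nat.pair_unpair]⟩
  · have hxN := (l2_abs_apply_le _ (w (Nat.pair n i))).trans_lt (hN (Nat.pair n i) x hx)
    rwa [coordProj_apply_mem _ (hwSN _).2] at hxN

/-- The tags are the entries of a Euclidean embedding of `K`, preceded by the constant entry `1`.
They are written at level `n` when `(n + 1) * ρ x ≤ 1 ≤ (n + 2) * ρ x`, on coordinates where the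
points of `K` have small entries, and are faded out elsewhere. Reading the constant entry reveals
whether a point is faded at level `n`. -/
theorem IsFinDimCompact.exists_tagging (hK : IsFinDimCompact K) (S : ℕ → Finset ι)
    {ρ : l2Space ι → ℝ} (hρ : Continuous ρ) (hρ01 : ∀ x, ρ x ∈ Icc 0 1) {ε : ℝ} (hε : 0 < ε) :
    ∃ Φ : l2Space ι → l2Space ι, Continuous Φ ∧ (∀ x, ‖Φ x‖ ≤ ε) ∧ (∀ x, ρ x = 0 → Φ x = 0) ∧
      ∀ y, ρ y ≠ 0 → Φ y ∈ l2fin ι ∧ ∃ (n : ℕ) (J : Set ι), 1 ≤ n * ρ y ∧ (∀ j ∈ J, j ∉ S n) ∧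
        (∃ j ∈ J, ∀ x ∈ K, (x : ι → ℝ) j ≠ (Φ y : ι → ℝ) j) ∧
        ∀ x ∈ K, y ∈ K → (∀ j ∈ J, (Φ x : ι → ℝ) j = (Φ y : ι → ℝ) j) → x = y := by
  obtain ⟨m, f, hf, hf0, hfm, hfK⟩ := hK.exists_seq_injOn
  choose b hb0 hb1 hb_zero hb using exists_window
  obtain ⟨Φ, w, δ, hΦc, hΦε, hΦw, hΦ0, hδ, hwS, hKw⟩ := exists_l2Space_map_of_paired_coords hK.1
    (fun n => S (n + 2)) (g := fun n i x => b n (ρ x) * f i x) (fun n i => by fun_prop)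
    (fun n i x => unitInterval.mul_mem (hb n (ρ x)) (hf i x)) hε
  refine ⟨Φ, hΦc, hΦε, fun x hx => ?_, fun y hy => ?_⟩
  · ext j
    by_contra hj
    obtain ⟨n, i, rfl⟩ := hΦ0 x j hj
    exact hj (by simp [hΦw, hx, hb0])
  obtain ⟨n, hn1, hn2⟩ := exists_nat_window ((hρ01 y).1.lt_of_ne' hy) (hρ01 y).2
  have hby : b n (ρ y) = 1 := hb1 n _ hn1 hn2
  refine ⟨?_, n + 2, range (w n), mod_cast hn2, forall_mem_range.2 (hwS n),
    ⟨_, mem_range_self 0, fun x hx hxy => ?_⟩, fun x hx hyK hxy => hfK hx hyK ?_⟩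
  · refine ((finite_Iio (n + 2)).prod (finite_Iic m)).image (fun q => w q.1 q.2)
      |>.subset fun j hj => ?_
    obtain ⟨k, i, rfl⟩ := hΦ0 y j hj
    rw [mem_ofPred_eq, hΦw] at hj
    refine ⟨(k, i), ⟨mem_Iio.2 (lt_of_not_ge fun hk => hj ?_),
      mem_Iic.2 (le_of_not_gt fun hi => hj ?_)⟩, rfl⟩
    · have hk1 : 1 ≤ k * ρ y := hn2.trans
        (mul_le_mul_of_nonneg_right (mod_cast hk) (hρ01 y).1)
      rw [hb_zero k _ hk1, zero_mul, mul_zero]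
    · rw [hfm i hi, mul_zero, mul_zero]
  · have hlt := hKw n 0 x hx
    rw [hxy, hΦw, hby, hf0, mul_one, mul_one, abs_of_pos (hδ n 0)] at hlt
    exact hlt.false
  · have hfade : ∀ i, b n (ρ x) * f i x = f i y := fun i => by
      simpa [hΦw, hby, (hδ n i).ne'] using hxy _ (mem_range_self i)
    have hbx : b n (ρ x) = 1 := by simpa [hf0] using hfade 0
    funext i
    simpa [hbx] using hfade i

end Tagging

theorem l2fin_add_mem {ι : Type*} {x y : l2Space ι} (hx : x ∈ l2fin ι) (hy : y ∈ l2fin ι) :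
    x + y ∈ l2fin ι :=
  (Finite.union hx hy).subset (Function.support_add (x : ι → ℝ) (y : ι → ℝ))

/-- The embedding is the sum of a truncation `p`, which is the identity on `B` and has finitely
supported values off `B`, and a tagging map `Φ`, which vanishes on `B` and uses coordinates that are
not used by `p`. -/
theorem absorbsFinDimCompacta_l2fin (ι : Type*) [Infinite ι] :
    AbsorbsFinDimCompacta (l2fin ι) := by
  intro K hK B hBK hBc hBY ε hε
  obtain ⟨ρ, rfl, hρ⟩ := perfectlyNormalSpace_iff_forall_isClosed_preimage_zero.1 inferInstance B
    hBc.isClosed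
  obtain ⟨S, p, hp, hpB, hpS, hpε⟩ := exists_truncation hK.1 ρ.continuous (half_pos hε)
  obtain ⟨Φ, hΦ, hΦε, hΦB, hΦK⟩ := hK.exists_tagging S ρ.continuous hρ (half_pos hε)
  have hB : ∀ x ∈ K, ρ x = 0 → p x + Φ x = x := fun x hx hρx => by
    rw [hpB x hx hρx, hΦB x hρx, add_zero]
  have hne : ∀ x ∈ K, ∀ y ∈ K, ρ y ≤ ρ x → p x + Φ x = p y + Φ y → x = y := by
    intro x hx y hy hle hxy
    have hxy_apply : ∀ j, (p x : ι → ℝ) j + (Φ x : ι → ℝ) j = (p y : ι → ℝ) j + (Φ y : ι → ℝ) j :=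
      fun j => congrFun (congrArg Subtype.val hxy) j
    rcases eq_or_ne (ρ y) 0 with hρy | hρy
    · rcases eq_or_ne (ρ x) 0 with hρx | hρx
      · rwa [hB x hx hρx, hB y hy hρy] at hxy
      · obtain ⟨-, n, J, hn, hJ, ⟨j, hj, hne⟩, -⟩ := hΦK x hρx
        refine absurd ?_ (hne y hy)
        rw [← zero_add ((Φ x : ι → ℝ) j), ← hpS x hx n (hρ x).1 hn j (hJ j hj), ← hB y hy hρy]
        exact (hxy_apply j).symm
    · obtain ⟨-, n, J, hn, hJ, -, htag⟩ := hΦK y hρy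
      refine htag x hx hy fun j hj => ?_
      have hpx := hpS x hx n (hρ x).1 (hn.trans (by gcongr)) j (hJ j hj)
      have hpy := hpS y hy n (hρ y).1 hn j (hJ j hj)
      simpa only [hpx, hpy, zero_add] using hxy_apply j
  refine ⟨fun x => p x + Φ x, hp.add hΦ.continuousOn, fun x hx y hy hxy => ?_, fun x hx => ?_,
    fun x hx => hB x (hBK hx) hx, fun x hx => ?_⟩
  · rcases le_total (ρ y) (ρ x) with hle | hle
    · exact hne x hx y hy hle hxy
    · exact (hne y hy x hx hle hxy.symm).symm
  · rcases eq_or_ne (ρ x) 0 with hρx | hρx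
    · simpa only [hB x hx hρx] using hBY hρx
    · obtain ⟨hΦx, n, J, hn, -⟩ := hΦK x hρx
      have hpx : p x ∈ l2fin ι := (S n).finite_toSet.subset fun i hi =>
        not_not.1 fun hiS => hi (hpS x hx n (hρ x).1 hn i hiS)
      exact l2fin_add_mem hpx hΦx
  · calc dist (p x + Φ x) x ≤ dist (p x + Φ x) (p x) + dist (p x) x := dist_triangle _ _ _
      _ ≤ ε / 2 + ε / 2 := by
        rw [dist_self_add_left]
        exact add_le_add (hΦε x) (hpε x hx)
      _ = ε := add_halves ε

/-! ### Discrete families and Stone's decomposition -/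

section DiscreteFamily

/-- A family of subsets is discrete if every point of the ambient space has a neighborhood that
meets at most one member. -/
def IsDiscreteFamily {V I : Type*} [TopologicalSpace V] (C : I → Set V) : Prop :=
  ∀ p, ∃ U ∈ 𝓝 p, {i | (C i ∩ U).Nonempty}.Subsingleton

variable {V W I : Type*}

theorem IsDiscreteFamily.mono [TopologicalSpace V] {C C' : I → Set V} (hC : IsDiscreteFamily C)
    (h : ∀ i, C' i ⊆ C i) : IsDiscreteFamily C' := by
  intro p
  obtain ⟨U, hU, hUC⟩ := hC p
  exact ⟨U, hU, hUC.anti fun i hi => hi.mono (inter_subset_inter_left U (h i))⟩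

theorem IsDiscreteFamily.locallyFinite [TopologicalSpace V] {C : I → Set V}
    (hC : IsDiscreteFamily C) : LocallyFinite C := fun p =>
  let ⟨U, hU, hUC⟩ := hC p
  ⟨U, hU, hUC.finite⟩

theorem IsDiscreteFamily.eq_of_mem [TopologicalSpace V] {C : I → Set V} (hC : IsDiscreteFamily C)
    {i j : I} {p : V} (hi : p ∈ C i) (hj : p ∈ C j) : i = j :=
  let ⟨_, hU, hUC⟩ := hC p
  hUC ⟨p, hi, mem_of_mem_nhds hU⟩ ⟨p, hj, mem_of_mem_nhds hU⟩

theorem IsDiscreteFamily.image [TopologicalSpace V] [TopologicalSpace W] {C : I → Set V}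
    (hC : IsDiscreteFamily C) (θ : V ≃ₜ W) : IsDiscreteFamily fun i => θ '' C i := by
  intro p
  obtain ⟨U, hU, hUC⟩ := hC (θ.symm p)
  refine ⟨θ.symm ⁻¹' U, θ.symm.continuous.continuousAt hU, hUC.anti ?_⟩
  rintro i ⟨_, ⟨x, hx, rfl⟩, hxU⟩
  exact ⟨x, hx, by simpa using hxU⟩

theorem isDiscreteFamily_of_le_dist [PseudoMetricSpace V] {C : I → Set V} {ε : ℝ} (hε : 0 < ε)
    (h : ∀ i j, i ≠ j → ∀ x ∈ C i, ∀ y ∈ C j, ε ≤ dist x y) : IsDiscreteFamily C := by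
  refine fun p => ⟨Metric.ball p (ε / 2), Metric.ball_mem_nhds p (half_pos hε), ?_⟩
  rintro i ⟨x, hx, hxp⟩ j ⟨y, hy, hyp⟩
  by_contra hij
  rw [Metric.mem_ball] at hxp hyp
  linarith [h i j hij x hx y hy, dist_triangle_right x y p]

theorem IsDiscreteFamily.exists_le_dist [MetricSpace V] {C : I → Set V} (hC : IsDiscreteFamily C)
    (hK : ∀ i, IsCompact (C i)) :
    ∃ δ : I → ℝ, (∀ i, 0 < δ i) ∧ ∀ i j, i ≠ j → ∀ x ∈ C i, ∀ y ∈ C j, δ i ≤ dist x y := by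
  have hclosed : ∀ i, IsClosed (⋃ j : {j : I // i ≠ j}, C j) := fun i => by
    have hlf : LocallyFinite fun j : {j : I // i ≠ j} => C j :=
      hC.locallyFinite.comp_injective Subtype.val_injective
    exact hlf.isClosed_iUnion fun j => (hK j).isClosed
  have hdisj : ∀ i, Disjoint (C i) (⋃ j : {j : I // i ≠ j}, C j) := fun i =>
    disjoint_iUnion_right.2 fun j => disjoint_left.2 fun _ hi hj => j.2 (hC.eq_of_mem hi hj)
  choose δ hδ0 hδ using fun i => (hdisj i).exists_thickenings (hK i) (hclosed i)
  refine ⟨δ, hδ0, fun i j hij x hx y hy => le_of_not_gt fun hlt => ?_⟩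
  exact disjoint_left.1 (hδ i) (Metric.self_subset_thickening (hδ0 i) _ hx)
    (Metric.mem_thickening_iff.2 ⟨y, mem_iUnion.2 ⟨⟨j, hij⟩, hy⟩, hlt⟩)

theorem IsDiscreteFamily.exists_thickening [MetricSpace V] {C : I → Set V}
    (hC : IsDiscreteFamily C) (hK : ∀ i, IsCompact (C i)) :
    ∃ r : I → ℝ, (∀ i, 0 < r i) ∧ IsDiscreteFamily fun i => Metric.thickening (r i) (C i) := by
  obtain ⟨δ, hδ0, hδ⟩ := hC.exists_le_dist hK
  refine ⟨fun i => δ i / 4, fun i => div_pos (hδ0 i) four_pos, fun p => ?_⟩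
  obtain ⟨U, hU, hUC⟩ := hC p
  obtain ⟨s, hs, hsU⟩ := Metric.mem_nhds_iff.1 hU
  refine ⟨Metric.ball p (s / 2), Metric.ball_mem_nhds p (half_pos hs), ?_⟩
  rintro i ⟨q, hq, hqp⟩ j ⟨q', hq', hqp'⟩
  by_contra hij
  obtain ⟨x, hx, hxq⟩ := Metric.mem_thickening_iff.1 hq
  obtain ⟨y, hy, hyq⟩ := Metric.mem_thickening_iff.1 hq'
  rw [Metric.mem_ball] at hqp hqp'
  have hxp : dist x p < s / 2 + δ i / 4 := by linarith [dist_triangle_left x p q]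
  have hyp : dist y p < s / 2 + δ j / 4 := by linarith [dist_triangle_left y p q']
  have hxy := dist_triangle_right x y p
  have hi := hδ i j hij x hx y hy
  have hj := hδ j i (Ne.symm hij) y hy x hx
  rw [dist_comm] at hj
  exact hij (hUC ⟨x, hx, hsU (Metric.mem_ball.2 (by linarith))⟩
    ⟨y, hy, hsU (Metric.mem_ball.2 (by linarith))⟩)

end DiscreteFamily

section Decomposition

/-- Stone's argument: well-order the points and let `S n x` consist of the points `y` that lie in
the ball of `x` at depth at least `1 / (n + 1)` and for which no earlier ball contains `y`. -/
theorem exists_stone_cover {F : Type*} [PseudoMetricSpace F] {r : F → ℝ} (hr : ∀ x, 0 < r x) :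
    ∃ S : ℕ → F → Set F, (∀ y, ∃ n x, y ∈ S n x) ∧
      (∀ n x, IsClosed (S n x) ∧ S n x ⊆ Metric.closedBall x (r x)) ∧
      ∀ n x x', x ≠ x' → ∀ y ∈ S n x, ∀ y' ∈ S n x', 1 / ((n : ℝ) + 1) ≤ dist y y' := by
  have wf : WellFounded (WellOrderingRel (α := F)) := WellOrderingRel.isWellOrder.wf
  have hne : ∀ y : F, {x : F | dist y x < r x}.Nonempty := fun y => ⟨y, by simpa using hr y⟩
  let μ : F → F := fun y => wf.min _ (hne y)
  have hμ : ∀ y, dist y (μ y) < r (μ y) := fun y => wf.min_mem _ (hne y)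
  have hμ_min : ∀ y x, WellOrderingRel x (μ y) → r x ≤ dist y x := fun y x h =>
    le_of_not_gt fun hlt => wf.not_lt_min {x : F | dist y x < r x} hlt h
  let S : ℕ → F → Set F := fun n x => {y | μ y = x ∧ dist y x + 1 / ((n : ℝ) + 1) ≤ r x}
  have hsep_lt : ∀ n x x', WellOrderingRel x x' → ∀ y ∈ S n x, ∀ y' ∈ S n x',
      1 / ((n : ℝ) + 1) ≤ dist y y' := by
    rintro n x x' hlt y ⟨rfl, hy⟩ y' ⟨rfl, -⟩
    linarith [hμ_min _ _ hlt, dist_triangle_left y' (μ y) y]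
  have hsep : ∀ n x x', x ≠ x' → ∀ y ∈ S n x, ∀ y' ∈ S n x', 1 / ((n : ℝ) + 1) ≤ dist y y' := by
    intro n x x' hxx y hy y' hy'
    rcases trichotomous_of WellOrderingRel x x' with h | h | h
    · exact hsep_lt n x x' h y hy y' hy'
    · exact absurd h hxx
    · exact dist_comm y y' ▸ hsep_lt n x' x h y' hy' y hy
  refine ⟨fun n x => closure (S n x), fun y => ?_, fun n x => ⟨isClosed_closure, ?_⟩,
    fun n x x' hxx y hy y' hy' => ?_⟩
  · obtain ⟨n, hn⟩ := exists_nat_one_div_lt (sub_pos.2 (hμ y))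
    exact ⟨n, μ y, subset_closure ⟨rfl, by linarith⟩⟩
  · refine closure_minimal (fun y hy => ?_) Metric.isClosed_closedBall
    have hn : (0 : ℝ) < 1 / (n + 1) := by positivity
    exact Metric.mem_closedBall.2 (by linarith [hy.2])
  · have hmem : ((y, y') : F × F) ∈ closure (S n x ×ˢ S n x') := by
      rw [closure_prod_eq]
      exact ⟨hy, hy'⟩
    exact closure_minimal (t := {q : F × F | 1 / ((n : ℝ) + 1) ≤ dist q.1 q.2})
      (fun q hq => hsep n x x' hxx _ hq.1 _ hq.2) (isClosed_le continuous_const continuous_dist)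
      hmem

/-- The union of a discrete family of finite-dimensional compacta. -/
def IsDiscreteFinDimCompact {V : Type u} [TopologicalSpace V] (A : Set V) : Prop :=
  ∃ (I : Type u) (C : I → Set V), A = ⋃ i, C i ∧ (∀ i, IsFinDimCompact (C i)) ∧ IsDiscreteFamily C

theorem IsDiscreteFinDimCompact.image {V : Type u} [TopologicalSpace V] [T2Space V] {A : Set V}
    (h : IsDiscreteFinDimCompact A) (θ : V ≃ₜ V) : IsDiscreteFinDimCompact (θ '' A) := by
  obtain ⟨I, C, rfl, hC, hd⟩ := h
  exact ⟨I, fun i => θ '' C i, image_iUnion,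
    fun i => (hC i).image θ.continuous.continuousOn θ.injective.injOn, hd.image θ⟩

variable {V : Type u} [MetricSpace V]

theorem exists_eq_iUnion_isDiscreteFinDimCompact_of_locallyCompactSpace {F : Set V}
    (hF : TopFinDim ↥F) [LocallyCompactSpace ↥F] :
    ∃ A : ℕ → Set V, F = ⋃ n, A n ∧ ∀ n, IsDiscreteFinDimCompact (A n) := by
  choose r hr hrc using fun x : F => Metric.exists_isCompact_closedBall x
  obtain ⟨S, hS, hSx, hsep⟩ := exists_stone_cover hr
  have hSfd : ∀ n x, IsFinDimCompact (S n x) := fun n x =>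
    ⟨(hrc x).of_isClosed_subset (hSx n x).1 (hSx n x).2,
      hF.of_isClosedEmbedding (hSx n x).1.isClosedEmbedding_subtypeVal⟩
  refine ⟨fun n => ⋃ x, Subtype.val '' S n x, Subset.antisymm (fun y hy => ?_) ?_,
    fun n => ⟨F, _, rfl, fun x => ?_,
      isDiscreteFamily_of_le_dist (Nat.one_div_pos_of_nat (n := n)) ?_⟩⟩
  · obtain ⟨n, x, hyS⟩ := hS ⟨y, hy⟩
    exact mem_iUnion_of_mem n (mem_iUnion_of_mem x (mem_image_of_mem Subtype.val hyS))
  · exact iUnion_subset fun n => iUnion_subset fun x => Subtype.coe_image_subset F (S n x)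
  · exact (hSfd n x).image continuous_subtype_val.continuousOn Subtype.val_injective.injOn
  · rintro x x' hxx _ ⟨y, hy, rfl⟩ _ ⟨y', hy', rfl⟩
    exact hsep n x x' hxx y hy y' hy'

theorem IsSigmaFinDimLocallyCompact.exists_eq_iUnion_isDiscreteFinDimCompact {Y : Set V}
    (hY : IsSigmaFinDimLocallyCompact Y) :
    ∃ A : ℕ → Set V, Y = ⋃ n, A n ∧ ∀ n, IsDiscreteFinDimCompact (A n) := by
  obtain ⟨F, rfl, hF⟩ := hY
  have := fun n => (hF n).2
  choose A hA hAd using fun n =>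
    exists_eq_iUnion_isDiscreteFinDimCompact_of_locallyCompactSpace (hF n).1
  refine ⟨fun k => A k.unpair.1 k.unpair.2, ?_, fun k => hAd _ _⟩
  simp only [iUnion_unpair, ← hA]

end Decomposition

/-! ### Moving discrete unions into an absorbing set -/

section LocallyFinDimCompact

/-- A subset of the ambient space that is locally a finite-dimensional compactum, as seen from every
point of the ambient space; in particular it is closed. -/
def IsLocallyFinDimCompact {V : Type*} [TopologicalSpace V] (C : Set V) : Prop :=
  ∀ p, ∃ N ∈ 𝓝 p, IsClosed N ∧ IsFinDimCompact (C ∩ N)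

theorem IsLocallyFinDimCompact.image {V : Type*} [TopologicalSpace V] [T2Space V] {C : Set V}
    (h : IsLocallyFinDimCompact C) (θ : V ≃ₜ V) : IsLocallyFinDimCompact (θ '' C) := by
  intro p
  obtain ⟨N, hN, hNc, hCN⟩ := h (θ.symm p)
  refine ⟨θ '' N, ?_, θ.isClosedMap _ hNc, ?_⟩
  · simpa using θ.isOpenMap.image_mem_nhds hN
  · rw [← image_inter θ.injective]
    exact hCN.image θ.continuous.continuousOn θ.injective.injOn

variable {V : Type u} [MetricSpace V] {A C C' : Set V}

theorem IsLocallyFinDimCompact.empty : IsLocallyFinDimCompact (∅ : Set V) := fun _ =>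
  ⟨univ, Filter.univ_mem, isClosed_univ, by rw [empty_inter]; exact IsFinDimCompact.empty⟩

theorem IsLocallyFinDimCompact.union (h : IsLocallyFinDimCompact C)
    (h' : IsLocallyFinDimCompact C') : IsLocallyFinDimCompact (C ∪ C') := by
  intro p
  obtain ⟨N, hN, hNc, hCN⟩ := h p
  obtain ⟨N', hN', hNc', hCN'⟩ := h' p
  refine ⟨N ∩ N', Filter.inter_mem hN hN', hNc.inter hNc', ?_⟩
  rw [union_inter_distrib_right]
  refine .union ?_ ?_
  · rw [← inter_assoc]
    exact hCN.mono (hCN.1.inter_right hNc') inter_subset_left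
  · rw [inter_comm N, ← inter_assoc]
    exact hCN'.mono (hCN'.1.inter_right hNc) inter_subset_left

theorem IsDiscreteFinDimCompact.isLocallyFinDimCompact (h : IsDiscreteFinDimCompact A) :
    IsLocallyFinDimCompact A := by
  obtain ⟨I, C, rfl, hC, hd⟩ := h
  intro p
  obtain ⟨U, hU, hUC⟩ := hd p
  obtain ⟨r, hr, hrU⟩ := Metric.nhds_basis_closedBall.mem_iff.1 hU
  refine ⟨Metric.closedBall p r, Metric.closedBall_mem_nhds _ hr, Metric.isClosed_closedBall, ?_⟩
  rcases ((⋃ i, C i) ∩ Metric.closedBall p r).eq_empty_or_nonempty with hempty | ⟨x, hx, hxB⟩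
  · rw [hempty]
    exact IsFinDimCompact.empty
  · obtain ⟨i, hi⟩ := mem_iUnion.1 hx
    have hCi : (⋃ i, C i) ∩ Metric.closedBall p r = C i ∩ Metric.closedBall p r := by
      refine Subset.antisymm (fun y ⟨hy, hyB⟩ => ⟨?_, hyB⟩)
        (inter_subset_inter_left _ (subset_iUnion C i))
      obtain ⟨j, hj⟩ := mem_iUnion.1 hy
      rwa [hUC ⟨x, hi, hrU hxB⟩ ⟨y, hj, hrU hyB⟩]
    rw [hCi]
    exact (hC i).mono ((hC i).1.inter_right Metric.isClosed_closedBall) inter_subset_left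

theorem IsLocallyFinDimCompact.exists_inter_thickening_subset (h : IsLocallyFinDimCompact C)
    {K : Set V} (hK : IsCompact K) :
    ∃ D ⊆ C, IsFinDimCompact D ∧ ∃ ε > 0, C ∩ Metric.thickening ε K ⊆ D := by
  obtain ⟨D, hDC, hD, O, hO, hKO, hCO⟩ :
      ∃ D ⊆ C, IsFinDimCompact D ∧ ∃ O, IsOpen O ∧ K ⊆ O ∧ C ∩ O ⊆ D := by
    refine hK.induction_on ?_ ?_ ?_ fun x _ => ?_
    · exact ⟨∅, empty_subset _, .empty, ∅, isOpen_empty, subset_rfl, inter_subset_right⟩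
    · rintro s t hst ⟨D, hDC, hD, O, hO, htO, hCO⟩
      exact ⟨D, hDC, hD, O, hO, hst.trans htO, hCO⟩
    · rintro s t ⟨D, hDC, hD, O, hO, hsO, hCO⟩ ⟨D', hDC', hD', O', hO', htO', hCO'⟩
      refine ⟨D ∪ D', union_subset hDC hDC', hD.union hD', O ∪ O', hO.union hO',
        union_subset_union hsO htO', ?_⟩
      rw [inter_union_distrib_left]
      exact union_subset_union hCO hCO'
    · obtain ⟨N, hN, -, hCN⟩ := h x
      exact ⟨interior N, mem_nhdsWithin_of_mem_nhds (interior_mem_nhds.2 hN), C ∩ N,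
        inter_subset_left, hCN, interior N, isOpen_interior, subset_rfl,
        inter_subset_inter_right _ interior_subset⟩
  obtain ⟨ε, hε, hεO⟩ := hK.exists_thickening_subset_open hO hKO
  exact ⟨D, hDC, hD, ε, hε, (inter_subset_inter_right _ hεO).trans hCO⟩

end LocallyFinDimCompact

theorem IsDiscreteFamily.exists_continuous_glue {V W I : Type*} [TopologicalSpace V]
    [TopologicalSpace W] {T : I → Set V} (hT : IsDiscreteFamily T) {f : V → W} (hf : Continuous f)
    {g : I → V → W} (hg : ∀ i, Continuous (g i)) (hgf : ∀ i, ∀ p ∉ T i, g i p = f p) :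
    ∃ Θ : V → W, Continuous Θ ∧ (∀ i, ∀ p ∈ T i, Θ p = g i p) ∧
      ∀ p, (∀ i, p ∉ T i) → Θ p = f p := by
  classical
  let Θ : V → W := fun p => if h : ∃ i, p ∈ T i then g h.choose p else f p
  have hΘ : ∀ i, ∀ p ∈ T i, Θ p = g i p := fun i p hp => by
    have hex : ∃ i, p ∈ T i := ⟨i, hp⟩
    simp only [Θ, dif_pos hex, hT.eq_of_mem hex.choose_spec hp]
  have hΘf : ∀ p, (∀ i, p ∉ T i) → Θ p = f p := fun p hp => dif_neg (not_exists.2 hp)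
  refine ⟨Θ, continuous_iff_continuousAt.2 fun p => ?_, hΘ, hΘf⟩
  obtain ⟨U, hU, hUT⟩ := hT p
  by_cases hex : ∃ i, (T i ∩ U).Nonempty
  · obtain ⟨i, hi⟩ := hex
    refine (hg i).continuousAt.congr (Filter.mem_of_superset hU fun q hq => ?_)
    by_cases hqi : q ∈ T i
    · exact (hΘ i q hqi).symm
    · have hqT : ∀ j, q ∉ T j := fun j hj => hqi (hUT ⟨q, hj, hq⟩ hi ▸ hj)
      exact (hgf i q hqi).trans (hΘf q hqT).symm
  · exact hf.continuousAt.congr (Filter.mem_of_superset hU fun q hq =>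
      (hΘf q fun j hj => hex ⟨j, q, hj, hq⟩).symm)

theorem mapsTo_of_injective_of_forall_notMem {X : Type*} {T : Set X} {f : X → X}
    (hf : f.Injective) (h : ∀ p ∉ T, f p = p) : MapsTo f T T := fun p hp => by
  by_contra hfp
  exact hfp (by rwa [hf (h _ hfp)])

theorem IsDiscreteFamily.exists_homeomorph_glue {X I : Type*} [TopologicalSpace X] {T : I → Set X}
    (hT : IsDiscreteFamily T) {θ : I → X ≃ₜ X} (hθ : ∀ i, ∀ p ∉ T i, θ i p = p) :
    ∃ Θ : X ≃ₜ X, (∀ i, ∀ p ∈ T i, Θ p = θ i p) ∧ ∀ p, (∀ i, p ∉ T i) → Θ p = p := by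
  have hθ_symm : ∀ i, ∀ p ∉ T i, (θ i).symm p = p := fun i p hp => by
    rw [Homeomorph.symm_apply_eq, hθ i p hp]
  have hθ_mem : ∀ i, MapsTo (θ i) (T i) (T i) := fun i =>
    mapsTo_of_injective_of_forall_notMem (θ i).injective (hθ i)
  have hθ_symm_mem : ∀ i, MapsTo (θ i).symm (T i) (T i) := fun i =>
    mapsTo_of_injective_of_forall_notMem (θ i).symm.injective (hθ_symm i)
  obtain ⟨f, hfc, hf, hf_id⟩ := hT.exists_continuous_glue continuous_id
    (fun i => (θ i).continuous) hθ
  obtain ⟨g, hgc, hg, hg_id⟩ := hT.exists_continuous_glue continuous_id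
    (fun i => (θ i).symm.continuous) hθ_symm
  refine ⟨⟨⟨f, g, fun p => ?_, fun p => ?_⟩, hfc, hgc⟩, hf, hf_id⟩ <;>
    by_cases hp : ∃ i, p ∈ T i
  · obtain ⟨i, hi⟩ := hp
    rw [hf i p hi, hg i _ (hθ_mem i hi), Homeomorph.symm_apply_apply]
  · rw [hf_id p (not_exists.1 hp), id, hg_id p (not_exists.1 hp), id]
  · obtain ⟨i, hi⟩ := hp
    rw [hg i p hi, hf i _ (hθ_symm_mem i hi), Homeomorph.apply_symm_apply]
  · rw [hg_id p (not_exists.1 hp), id, hf_id p (not_exists.1 hp), id]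

theorem exists_dist_lt_of_mem_thickening {V W : Type*} [PseudoMetricSpace V] [PseudoMetricSpace W]
    {K : Set V} (hK : IsCompact K) {G : V → W} (hG : Continuous G) {η : ℝ} (hη : 0 < η) :
    ∃ δ > 0, ∀ p ∈ Metric.thickening δ K, ∀ q, dist q p < δ → dist (G q) (G p) < η := by
  obtain ⟨δ, hδ, hδK⟩ := Metric.mem_uniformity_dist.1 <|
    hK.uniformContinuousAt_of_continuousAt G (fun x _ => hG.continuousAt)
      (Metric.dist_mem_uniformity (half_pos hη))
  refine ⟨δ / 2, half_pos hδ, fun p hp q hq => ?_⟩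
  obtain ⟨x, hx, hxp⟩ := Metric.mem_thickening_iff.1 hp
  rw [dist_comm] at hxp
  have hGp : dist (G x) (G p) < η / 2 := hδK (by linarith) hx
  have hGq : dist (G x) (G q) < η / 2 :=
    hδK (by linarith [dist_triangle_right x q p, dist_comm p q]) hx
  linarith [dist_triangle_left (G q) (G p) (G x)]

section Move

variable {ι : Type u} [Infinite ι] {Y C : Set (l2Space ι)}

theorem AbsorbsFinDimCompacta.exists_homeomorph_mapsTo (hY : AbsorbsFinDimCompacta Y)
    (hC : IsLocallyFinDimCompact C) (hCY : C ⊆ Y) {K : Set (l2Space ι)} (hK : IsFinDimCompact K)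
    {ε : ℝ} (hε : 0 < ε) :
    ∃ θ : l2Space ι ≃ₜ l2Space ι, (∀ c ∈ C, θ c = c) ∧ MapsTo θ K Y ∧
      (∀ p ∉ Metric.thickening ε K, θ p = p) ∧ ∀ p, dist (θ p) p < ε := by
  obtain ⟨D, hDC, hD, ε', hε', hCD⟩ := hC.exists_inter_thickening_subset hK.1
  let e := min ε ε'
  have he : 0 < e := lt_min hε hε'
  obtain ⟨h, hc, hi, hmaps, hid, hnear⟩ := hY (K ∪ D) (hK.union hD) D subset_union_right hD.1
    (hDC.trans hCY) (e / 10) (by positivity)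
  obtain ⟨θ, hθ, hθ_id, hθ_near⟩ := exists_homeomorph_extending (hK.union hD).1 hD.1.isClosed hc hi
    (fun x hx => hid x hx.2) he hnear
  have hfar : ∀ p ∉ Metric.thickening e K, θ p = p := fun p hp => hθ_id p fun hp' =>
    hp (Metric.thickening_subset_of_subset e (by rw [union_sdiff_right]; exact sdiff_subset) hp')
  refine ⟨θ, fun c hcC => ?_, fun x hx => ?_, fun p hp => ?_, fun p => ?_⟩
  · by_cases hcK : c ∈ Metric.thickening e K
    · have hcD : c ∈ D := hCD ⟨hcC, Metric.thickening_mono (min_le_right _ _) _ hcK⟩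
      rw [hθ c (Or.inr hcD), hid c hcD]
    · exact hfar c hcK
  · exact hθ x (Or.inl hx) ▸ hmaps (Or.inl hx)
  · exact hfar p fun hpK => hp (Metric.thickening_mono (min_le_left _ _) _ hpK)
  · exact (hθ_near p).trans_le (min_le_left _ _)

/-- The move is small also when viewed through `G`; in the back-and-forth construction `G` is the
inverse of the homeomorphism reached so far. -/
theorem AbsorbsFinDimCompacta.exists_homeomorph_mapsTo_of_isDiscrete (hY : AbsorbsFinDimCompacta Y)
    (hC : IsLocallyFinDimCompact C) (hCY : C ⊆ Y) {A : Set (l2Space ι)}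
    (hA : IsDiscreteFinDimCompact A) {W : Type*} [PseudoMetricSpace W] {G : l2Space ι → W}
    (hG : Continuous G) {η : ℝ} (hη : 0 < η) :
    ∃ θ : l2Space ι ≃ₜ l2Space ι, (∀ c ∈ C, θ c = c) ∧ MapsTo θ A Y ∧
      ∀ p, dist (θ p) p < η ∧ dist (G (θ p)) (G p) < η := by
  obtain ⟨I, K, rfl, hK, hd⟩ := hA
  obtain ⟨r, hr0, hr⟩ := hd.exists_thickening fun i => (hK i).1
  choose δ hδ0 hδ using fun i => exists_dist_lt_of_mem_thickening (hK i).1 hG hη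
  let ε : I → ℝ := fun i => min (min η (δ i)) (r i)
  have hε0 : ∀ i, 0 < ε i := fun i => lt_min (lt_min hη (hδ0 i)) (hr0 i)
  have hεη : ∀ i, ε i ≤ η := fun i => (min_le_left _ _).trans (min_le_left _ _)
  have hεδ : ∀ i, ε i ≤ δ i := fun i => (min_le_left _ _).trans (min_le_right _ _)
  choose θ hθC hθK hθ_id hθ_near using fun i => hY.exists_homeomorph_mapsTo hC hCY (hK i) (hε0 i)
  have hdisc : IsDiscreteFamily fun i => Metric.thickening (ε i) (K i) :=
    hr.mono fun i => Metric.thickening_mono (min_le_right _ _) _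
  obtain ⟨Θ, hΘ, hΘ_id⟩ := hdisc.exists_homeomorph_glue hθ_id
  have hcases : ∀ p, (∃ i, p ∈ Metric.thickening (ε i) (K i) ∧ Θ p = θ i p) ∨ Θ p = p := fun p => by
    by_cases hex : ∃ i, p ∈ Metric.thickening (ε i) (K i)
    · exact Or.inl (hex.imp fun i hi => ⟨hi, hΘ i p hi⟩)
    · exact Or.inr (hΘ_id p (not_exists.1 hex))
  refine ⟨Θ, fun c hc => ?_, fun x hx => ?_, fun p => ?_⟩
  · rcases hcases c with ⟨i, -, h⟩ | h
    · rw [h, hθC i c hc]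
    · exact h
  · obtain ⟨i, hi⟩ := mem_iUnion.1 hx
    rw [hΘ i x (Metric.self_subset_thickening (hε0 i) _ hi)]
    exact hθK i hi
  · rcases hcases p with ⟨i, hp, h⟩ | h
    · rw [h]
      exact ⟨(hθ_near i p).trans_le (hεη i), hδ i p (Metric.thickening_mono (hεδ i) _ hp) _
        ((hθ_near i p).trans_le (hεδ i))⟩
    · simpa [h] using hη

end Move

/-! ### The back-and-forth construction -/

section Limit

open Filter

theorem exists_tendstoUniformly_of_dist_le_geometric_two {V W : Type*} [PseudoMetricSpace W]
    [CompleteSpace W] {f : ℕ → V → W} {C : ℝ}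
    (hf : ∀ n x, dist (f n x) (f (n + 1) x) ≤ C / 2 / 2 ^ n) :
    ∃ g : V → W, TendstoUniformly f g atTop := by
  have hcauchy : ∀ x, CauchySeq fun n => f n x := fun x =>
    cauchySeq_of_le_geometric_two fun n => hf n x
  choose g hg using fun x => cauchySeq_tendsto_of_complete (hcauchy x)
  have hbound : Tendsto (fun n : ℕ => C / 2 ^ n) atTop (𝓝 0) :=
    tendsto_const_nhds.div_atTop (tendsto_pow_atTop_atTop_of_one_lt one_lt_two)
  refine ⟨g, Metric.tendstoUniformly_iff.2 fun ε hε => ?_⟩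
  filter_upwards [hbound.eventually_lt_const hε] with n hn x
  rw [dist_comm]
  exact (dist_le_of_le_geometric_two_of_tendsto (fun n => hf n x) (hg x) n).trans_lt hn

theorem leftInverse_of_tendstoUniformly {V W N : Type*} [UniformSpace V] [T2Space V]
    [TopologicalSpace W] {l : Filter N} [l.NeBot] {F : N → V → W} {G : N → W → V} {f : V → W}
    {g : W → V} (hF : ∀ x, Tendsto (fun n => F n x) l (𝓝 (f x))) (hG : TendstoUniformly G g l)
    (hGc : ∀ n, Continuous (G n)) (h : ∀ n, Function.LeftInverse (G n) (F n)) :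
    Function.LeftInverse g f := fun x => by
  have hg : Continuous g := hG.continuous (Frequently.of_forall hGc)
  have hlim := hG.tendsto_comp hg.continuousAt (hF x)
  simp only [h _ x] at hlim
  exact tendsto_nhds_unique hlim tendsto_const_nhds

theorem exists_homeomorph_of_dist_le_geometric_two {V W : Type*} [MetricSpace V] [CompleteSpace V]
    [MetricSpace W] [CompleteSpace W] {H : ℕ → V ≃ₜ W} {C : ℝ}
    (hH : ∀ n x, dist (H n x) (H (n + 1) x) ≤ C / 2 / 2 ^ n)
    (hH_symm : ∀ n y, dist ((H n).symm y) ((H (n + 1)).symm y) ≤ C / 2 / 2 ^ n) :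
    ∃ Θ : V ≃ₜ W, (∀ x, Tendsto (fun n => H n x) atTop (𝓝 (Θ x))) ∧
      ∀ y, Tendsto (fun n => (H n).symm y) atTop (𝓝 (Θ.symm y)) := by
  obtain ⟨f, hf⟩ := exists_tendstoUniformly_of_dist_le_geometric_two hH
  obtain ⟨g, hg⟩ := exists_tendstoUniformly_of_dist_le_geometric_two hH_symm
  have hgf : Function.LeftInverse g f := leftInverse_of_tendstoUniformly hf.tendsto_at hg
    (fun n => (H n).symm.continuous) fun n => (H n).symm_apply_apply
  have hfg : Function.LeftInverse f g := leftInverse_of_tendstoUniformly hg.tendsto_at hf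
    (fun n => (H n).continuous) fun n => (H n).apply_symm_apply
  exact ⟨⟨⟨f, g, hgf, hfg⟩,
    hf.continuous (Frequently.of_forall fun n => (H n).continuous),
    hg.continuous (Frequently.of_forall fun n => (H n).symm.continuous)⟩,
    hf.tendsto_at, hg.tendsto_at⟩

end Limit

/-- A stage of the back-and-forth construction: a homeomorphism of `ℓ₂` together with a part of `Y'`
that its inverse already maps into `Y`. -/
structure Stage {ι : Type u} (Y Y' : Set (l2Space ι)) where
  homeo : l2Space ι ≃ₜ l2Space ι
  matched : Set (l2Space ι)
  isLocallyFinDimCompact : IsLocallyFinDimCompact matched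
  matched_subset : matched ⊆ Y'
  symm_mapsTo : MapsTo homeo.symm matched Y

namespace Stage

/-- The stage `t` extends the stage `s`: the matched part grows, the matching on it is kept, and the
homeomorphism and its inverse change by less than `η`. -/
structure IsNext {ι : Type u} {Y Y' : Set (l2Space ι)} (η : ℝ) (s t : Stage Y Y') : Prop where
  matched_subset : s.matched ⊆ t.matched
  symm_eqOn : EqOn t.homeo.symm s.homeo.symm s.matched
  dist_lt : ∀ x, dist (s.homeo x) (t.homeo x) < η
  dist_symm_lt : ∀ y, dist (s.homeo.symm y) (t.homeo.symm y) < η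

variable {ι : Type u} {Y Y' : Set (l2Space ι)} {s t r : Stage Y Y'} {η η' : ℝ}

theorem IsNext.trans (h : IsNext η s t) (h' : IsNext η' t r) : IsNext (η + η') s r where
  matched_subset := h.matched_subset.trans h'.matched_subset
  symm_eqOn := (h'.symm_eqOn.mono h.matched_subset).trans h.symm_eqOn
  dist_lt x := (dist_triangle _ _ _).trans_lt (add_lt_add (h.dist_lt x) (h'.dist_lt x))
  dist_symm_lt y :=
    (dist_triangle _ _ _).trans_lt (add_lt_add (h.dist_symm_lt y) (h'.dist_symm_lt y))

theorem IsNext.homeo_eq_of_mem (h : IsNext η s t) {x : l2Space ι} (hx : s.homeo x ∈ s.matched) :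
    t.homeo x = s.homeo x := by
  have hsymm := h.symm_eqOn hx
  rwa [Homeomorph.symm_apply_apply, Homeomorph.symm_apply_eq, eq_comm] at hsymm

/-- The stage with the roles of `Y` and `Y'` exchanged. -/
def symm (s : Stage Y Y') : Stage Y' Y where
  homeo := s.homeo.symm
  matched := s.homeo.symm '' s.matched
  isLocallyFinDimCompact := s.isLocallyFinDimCompact.image _
  matched_subset := s.symm_mapsTo.image_subset
  symm_mapsTo := by
    rintro _ ⟨c, hc, rfl⟩
    simpa using s.matched_subset hc

theorem exists_forth [Infinite ι] (s : Stage Y Y') (hY' : AbsorbsFinDimCompacta Y')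
    {A : Set (l2Space ι)} (hA : IsDiscreteFinDimCompact A) (hAY : A ⊆ Y) (hη : 0 < η) :
    ∃ t : Stage Y Y', IsNext η s t ∧ MapsTo t.homeo A t.matched := by
  obtain ⟨θ, hθ_id, hθA, hθ_near⟩ := hY'.exists_homeomorph_mapsTo_of_isDiscrete
    s.isLocallyFinDimCompact s.matched_subset (hA.image s.homeo) s.homeo.symm.continuous hη
  have hθ_symm : ∀ c ∈ s.matched, θ.symm c = c := fun c hc => by
    rw [Homeomorph.symm_apply_eq, hθ_id c hc]
  have hsymm : EqOn (s.homeo.trans θ).symm s.homeo.symm s.matched := fun c hc =>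
    congrArg s.homeo.symm (hθ_symm c hc)
  refine ⟨⟨s.homeo.trans θ, s.matched ∪ s.homeo.trans θ '' A, ?_, ?_, ?_⟩,
    ⟨subset_union_left, hsymm, fun x => ?_, fun y => ?_⟩,
    (mapsTo_image _ A).mono_right subset_union_right⟩
  · exact s.isLocallyFinDimCompact.union (hA.image _).isLocallyFinDimCompact
  · refine union_subset s.matched_subset ?_
    rintro _ ⟨a, ha, rfl⟩
    exact hθA (mem_image_of_mem _ ha)
  · rintro c (hc | ⟨a, ha, rfl⟩)
    · rw [hsymm hc]
      exact s.symm_mapsTo hc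
    · rw [Homeomorph.symm_apply_apply]
      exact hAY ha
  · rw [dist_comm]
    exact (hθ_near (s.homeo x)).1
  · simpa using (hθ_near (θ.symm y)).2

theorem exists_back [Infinite ι] (s : Stage Y Y') (hY : AbsorbsFinDimCompacta Y)
    {B : Set (l2Space ι)} (hB : IsDiscreteFinDimCompact B) (hBY : B ⊆ Y') (hη : 0 < η) :
    ∃ t : Stage Y Y', IsNext η s t ∧ B ⊆ t.matched := by
  obtain ⟨r, hsr, hBr⟩ := s.symm.exists_forth hY hB hBY hη
  have hr : ∀ c ∈ s.matched, r.homeo c = s.homeo.symm c := fun c hc =>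
    hsr.homeo_eq_of_mem (mem_image_of_mem _ hc)
  have hr_symm : ∀ c ∈ s.matched, r.homeo.symm (s.homeo.symm c) = c := fun c hc => by
    rw [Homeomorph.symm_apply_eq, hr c hc]
  refine ⟨r.symm, ⟨fun c hc => ?_, hr, hsr.dist_symm_lt, hsr.dist_lt⟩, fun b hb => ?_⟩
  · exact ⟨s.homeo.symm c, hsr.matched_subset (mem_image_of_mem _ hc), hr_symm c hc⟩
  · exact ⟨r.homeo b, hBr hb, r.homeo.symm_apply_apply b⟩

theorem exists_next [Infinite ι] (s : Stage Y Y') (hY : AbsorbsFinDimCompacta Y)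
    (hY' : AbsorbsFinDimCompacta Y') {A B : Set (l2Space ι)} (hA : IsDiscreteFinDimCompact A)
    (hAY : A ⊆ Y) (hB : IsDiscreteFinDimCompact B) (hBY : B ⊆ Y') (hη : 0 < η) :
    ∃ t : Stage Y Y', IsNext η s t ∧ MapsTo t.homeo A t.matched ∧ B ⊆ t.matched := by
  obtain ⟨t, hst, hAt⟩ := s.exists_forth hY' hA hAY (half_pos hη)
  obtain ⟨r, htr, hBr⟩ := t.exists_back hY hB hBY (half_pos hη)
  refine ⟨r, by simpa using hst.trans htr, fun a ha => ?_, hBr⟩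
  rw [htr.homeo_eq_of_mem (hAt ha)]
  exact htr.matched_subset (hAt ha)

theorem exists_seq [Infinite ι] (hY : AbsorbsFinDimCompacta Y) (hY' : AbsorbsFinDimCompacta Y')
    {A B : ℕ → Set (l2Space ι)} (hA : ∀ n, IsDiscreteFinDimCompact (A n)) (hAY : ∀ n, A n ⊆ Y)
    (hB : ∀ n, IsDiscreteFinDimCompact (B n)) (hBY : ∀ n, B n ⊆ Y') {η : ℕ → ℝ}
    (hη : ∀ n, 0 < η n) :
    ∃ S : ℕ → Stage Y Y', ∀ n, IsNext (η n) (S n) (S (n + 1)) ∧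
      MapsTo (S (n + 1)).homeo (A n) (S (n + 1)).matched ∧ B n ⊆ (S (n + 1)).matched := by
  choose next hnext using fun n (s : Stage Y Y') =>
    s.exists_next hY hY' (hA n) (hAY n) (hB n) (hBY n) (hη n)
  let start : Stage Y Y' := ⟨.refl _, ∅, .empty, empty_subset _, mapsTo_empty _ _⟩
  exact ⟨fun n => Nat.rec start next n, fun n => hnext n _⟩

theorem eventually_homeo_symm_eq {S : ℕ → Stage Y Y'} {η : ℕ → ℝ}
    (hS : ∀ n, IsNext (η n) (S n) (S (n + 1))) {n : ℕ} {c : l2Space ι}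
    (hc : c ∈ (S n).matched) :
    ∀ᶠ k in Filter.atTop, (S k).homeo.symm c = (S n).homeo.symm c := by
  filter_upwards [Filter.eventually_ge_atTop n] with k hk
  suffices h : c ∈ (S k).matched ∧ (S k).homeo.symm c = (S n).homeo.symm c from h.2
  induction k, hk using Nat.le_induction with
  | base => exact ⟨hc, rfl⟩
  | succ k _ ih => exact ⟨(hS k).matched_subset ih.1, ((hS k).symm_eqOn ih.1).trans ih.2⟩

end Stage

theorem AbsorbsFinDimCompacta.exists_homeomorph_image_eq {ι : Type u} [Infinite ι]
    {Y Y' : Set (l2Space ι)} (hY : AbsorbsFinDimCompacta Y) (hY' : AbsorbsFinDimCompacta Y')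
    (hYσ : IsSigmaFinDimLocallyCompact Y) (hYσ' : IsSigmaFinDimLocallyCompact Y') :
    ∃ Θ : l2Space ι ≃ₜ l2Space ι, Θ '' Y = Y' := by
  obtain ⟨A, rfl, hA⟩ := hYσ.exists_eq_iUnion_isDiscreteFinDimCompact
  obtain ⟨B, rfl, hB⟩ := hYσ'.exists_eq_iUnion_isDiscreteFinDimCompact
  obtain ⟨S, hS⟩ := Stage.exists_seq hY hY' hA (subset_iUnion A) hB (subset_iUnion B)
    (η := fun n => 1 / 2 / 2 ^ n) (fun n => by positivity)
  choose hnext hSA hSB using hS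
  obtain ⟨Θ, -, hΘ⟩ := exists_homeomorph_of_dist_le_geometric_two
    (fun n x => ((hnext n).dist_lt x).le) (fun n y => ((hnext n).dist_symm_lt y).le)
  have hmatched : ∀ n, ∀ c ∈ (S n).matched, Θ.symm c = (S n).homeo.symm c := fun n c hc =>
    tendsto_nhds_unique (hΘ c)
      (tendsto_const_nhds.congr' (.symm (Stage.eventually_homeo_symm_eq hnext hc)))
  refine ⟨Θ, Subset.antisymm (image_subset_iff.2 (iUnion_subset fun n a ha => ?_))
    (iUnion_subset fun n b hb => ⟨Θ.symm b, ?_, Θ.apply_symm_apply b⟩)⟩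
  · have hΘa : Θ a = (S (n + 1)).homeo a := by
      rw [← Θ.apply_symm_apply ((S (n + 1)).homeo a), hmatched (n + 1) _ (hSA n ha),
        Homeomorph.symm_apply_apply]
    rw [mem_preimage, hΘa]
    exact (S (n + 1)).matched_subset (hSA n ha)
  · rw [hmatched (n + 1) b (hSB n hb)]
    exact (S (n + 1)).symm_mapsTo (hSB n hb)

/-! ### Absorption in topological terms -/

/-- The topological counterpart of `AbsorbsFinDimCompacta`, in which the absorbing embedding is near
to the identity with respect to a prescribed open cover. -/
def CoverAbsorbsFinDimCompacta {X : Type*} [TopologicalSpace X] (Y : Set X) : Prop :=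
  ∀ K : Set X, IsCompact K → TopFinDim ↥K →
    ∀ B : Set X, IsCompact B → B ⊆ K ∩ Y →
    ∀ 𝒰 : Set (Set X), IsOpenCover 𝒰 →
      ∃ h : ↥K → X, Topology.IsEmbedding h ∧ Set.range h ⊆ Y ∧
        (∀ k : ↥K, (k : X) ∈ B → h k = (k : X)) ∧
        (∀ k : ↥K, ∃ U ∈ 𝒰, h k ∈ U ∧ (k : X) ∈ U)

theorem CoverAbsorbsFinDimCompacta.image {X Z : Type*} [TopologicalSpace X] [TopologicalSpace Z]
    {Y : Set X} (h : CoverAbsorbsFinDimCompacta Y) (e : X ≃ₜ Z) :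
    CoverAbsorbsFinDimCompacta (e '' Y) := by
  intro K hK hKd B hB hBK 𝒰 h𝒰
  have hBY : e.symm '' B ⊆ e.symm '' K ∩ Y := by
    rw [image_subset_iff]
    refine fun b hb => ⟨mem_image_of_mem _ (hBK hb).1, ?_⟩
    obtain ⟨y, hy, rfl⟩ := (hBK hb).2
    rwa [e.symm_apply_apply]
  obtain ⟨g, hg, hgY, hgB, hg_near⟩ := h (e.symm '' K) (hK.image e.symm.continuous)
    (hKd.of_isClosedEmbedding (e.symm.image K).symm.isClosedEmbedding) (e.symm '' B)
    (hB.image e.symm.continuous) hBY _ (h𝒰.comap e.continuous)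
  refine ⟨fun k => e (g (e.symm.image K k)),
    e.isEmbedding.comp (hg.comp (e.symm.image K).isEmbedding), ?_, fun k hk => ?_, fun k => ?_⟩
  · rintro _ ⟨k, rfl⟩
    exact mem_image_of_mem e (hgY (mem_range_self _))
  · change e (g (e.symm.image K k)) = k
    rw [hgB (e.symm.image K k) (mem_image_of_mem e.symm hk)]
    exact e.apply_symm_apply k
  · obtain ⟨_, ⟨U, hU, rfl⟩, hgU, hkU⟩ := hg_near (e.symm.image K k)
    refine ⟨U, hU, hgU, ?_⟩
    simpa using hkU

theorem AbsorbsFinDimCompacta.coverAbsorbsFinDimCompacta {V : Type*} [MetricSpace V] {Y : Set V}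
    (h : AbsorbsFinDimCompacta Y) :
    CoverAbsorbsFinDimCompacta Y := by
  intro K hK hKd B hB hBK 𝒰 h𝒰
  have : CompactSpace K := isCompact_iff_compactSpace.1 hK
  -- A Lebesgue number of the cover along `K` turns metric nearness into nearness for the cover.
  obtain ⟨δ, hδ, hδ𝒰⟩ := lebesgue_number_lemma_of_metric_sUnion hK h𝒰.1
    (h𝒰.2.symm ▸ subset_univ K)
  obtain ⟨g, hg, hg_inj, hgY, hgB, hg_near⟩ := h K ⟨hK, hKd⟩ B (fun b hb => (hBK hb).1) hB
    (fun b hb => (hBK hb).2) (δ / 2) (half_pos hδ)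
  refine ⟨K.domRestrict g, (hg.domRestrict.isClosedEmbedding hg_inj.injective).isEmbedding, ?_,
    fun k hk => hgB k hk, fun k => ?_⟩
  · rintro _ ⟨k, rfl⟩
    exact hgY k.2
  · obtain ⟨U, hU, hball⟩ := hδ𝒰 k k.2
    exact ⟨U, hU, hball (Metric.mem_ball.2 ((hg_near k k.2).trans_lt (half_lt_self hδ))),
      hball (Metric.mem_ball_self hδ)⟩

theorem CoverAbsorbsFinDimCompacta.absorbsFinDimCompacta {V : Type*} [PseudoMetricSpace V]
    {Y : Set V} (h : CoverAbsorbsFinDimCompacta Y) : AbsorbsFinDimCompacta Y := by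
  classical
  intro K hK B hBK hB hBY ε hε
  have hballs : IsOpenCover (range fun x : V => Metric.ball x (ε / 2)) :=
    isOpenCover_range (fun _ => Metric.isOpen_ball) fun x => ⟨x, Metric.mem_ball_self (half_pos hε)⟩
  obtain ⟨g, hg, hgY, hgB, hg_near⟩ := h K hK.1 hK.2 B hB (subset_inter hBK hBY) _ hballs
  let f : V → V := fun x => if hx : x ∈ K then g ⟨x, hx⟩ else x
  have hf : ∀ x (hx : x ∈ K), f x = g ⟨x, hx⟩ := fun x hx => dif_pos hx
  have hfg : K.domRestrict f = g := funext fun k => hf k k.2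
  refine ⟨f, ?_, ?_, fun x hx => ?_, fun x hx => ?_, fun x hx => ?_⟩
  · rw [continuousOn_iff_continuous_domRestrict, hfg]
    exact hg.continuous
  · rw [injOn_iff_injective, hfg]
    exact hg.injective
  · rw [hf x hx]
    exact hgY (mem_range_self _)
  · rw [hf x (hBK hx)]
    exact hgB _ hx
  · obtain ⟨_, ⟨z, rfl⟩, hgz, hxz⟩ := hg_near ⟨x, hx⟩
    rw [Metric.mem_ball] at hgz hxz
    rw [hf x hx]
    linarith [dist_triangle_right (g ⟨x, hx⟩) x z]

/-- (West) A pair `(X, Y)` with `Y ⊆ X` is homeomorphic to the pair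
`(ℓ₂(κ), ℓ₂ᶠ(κ))` for an infinite cardinal `κ` if and only if
(1) `X` is homeomorphic to `ℓ₂(κ)`, (2) `Y` is a countable union of
finite-dimensional locally compact spaces, and (3) `Y` absorbs
finite-dimensional compact subsets of `X`. -/
theorem pair_homeomorph_l2_l2fin_iff_west
    {X : Type u} [TopologicalSpace X] (Y : Set X)
    (κ : Cardinal.{u}) (hκ : Cardinal.aleph0 ≤ κ) :
    (∃ h : X ≃ₜ l2Space κ.out, (fun x => h x) '' Y = l2fin κ.out) ↔
      (Nonempty (X ≃ₜ l2Space κ.out) ∧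
        (∃ F : ℕ → Set X, Y = ⋃ n, F n ∧
          ∀ n, TopFinDim ↥(F n) ∧ LocallyCompactSpace ↥(F n)) ∧
        (∀ K : Set X, IsCompact K → TopFinDim ↥K →
          ∀ B : Set X, IsCompact B → B ⊆ K ∩ Y →
          ∀ 𝒰 : Set (Set X), IsOpenCover 𝒰 →
            ∃ h : ↥K → X, Topology.IsEmbedding h ∧ Set.range h ⊆ Y ∧
              (∀ k : ↥K, (k : X) ∈ B → h k = (k : X)) ∧
              (∀ k : ↥K, ∃ U ∈ 𝒰, h k ∈ U ∧ (k : X) ∈ U))) := by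
  have : Infinite κ.out := by rwa [Cardinal.infinite_iff, Cardinal.mk_out]
  have hl2fin_abs := absorbsFinDimCompacta_l2fin κ.out
  have hl2fin_sigma := isSigmaFinDimLocallyCompact_l2fin κ.out
  constructor
  · rintro ⟨e, he⟩
    have heY : e.symm '' l2fin κ.out = Y := by
      rw [← he]
      exact e.symm_image_image Y
    rw [← heY]
    exact ⟨⟨e⟩, hl2fin_sigma.image e.symm, hl2fin_abs.coverAbsorbsFinDimCompacta.image e.symm⟩
  · rintro ⟨⟨e⟩, hY_sigma, hY_abs⟩
    have heY_sigma : IsSigmaFinDimLocallyCompact (e '' Y) := .image hY_sigma e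
    have heY_abs : AbsorbsFinDimCompacta (e '' Y) :=
      (CoverAbsorbsFinDimCompacta.image hY_abs e).absorbsFinDimCompacta
    obtain ⟨Θ, hΘ⟩ := heY_abs.exists_homeomorph_image_eq hl2fin_abs heY_sigma hl2fin_sigma
    refine ⟨e.trans Θ, ?_⟩
    rw [← hΘ, image_image]
    rfl
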